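/- arXiv:2105.02496 — 7 statements merged into one kernel-verified Lean document; each statement's English description precedes it below -/
import Mathlib

section
/- Let G be a finite connected graph and let H be a subgraph of G containing at least one edge. Then e(L(G)) − e(L(H)) ≥ e(G) − e(H). -/
open SimpleGraph

/-- A bundled simple graph: a vertex type together with a simple graph on it. -/
structure FGraph where
  V : Type
  G : SimpleGraph V

/-- The line graph of a bundled graph: the vertices are the edges of `G`, two distinct
edges being adjacent iff they share an endpoint. -/
def FGraph.line (X : FGraph) : FGraph := ⟨X.G.edgeSet, X.G.lineGraph⟩

/-- The `k`-fold iterated line graph `L^k(G)`. -/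
def FGraph.iter (X : FGraph) (k : ℕ) : FGraph := FGraph.line^[k] X

/-- The number of vertices `n(G)`. -/
noncomputable def FGraph.n (X : FGraph) : ℕ := Nat.card X.V

/-- The number of edges `e(G)`. -/
noncomputable def FGraph.e (X : FGraph) : ℕ := Nat.card X.G.edgeSet

/-- The degree of a vertex. -/
noncomputable def FGraph.deg (X : FGraph) (v : X.V) : ℕ := Nat.card (X.G.neighborSet v)

/-- The maximum degree `Δ(G)`. -/
noncomputable def FGraph.maxDeg (X : FGraph) : ℕ := sSup (Set.range X.deg)

/-- The minimum degree `δ(G)`. -/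
noncomputable def FGraph.minDeg (X : FGraph) : ℕ := sInf (Set.range X.deg)

/-- The average degree `d(G) = 2e(G)/n(G)`, as a rational number. -/
noncomputable def FGraph.avgDeg (X : FGraph) : ℚ := 2 * (X.e : ℚ) / (X.n : ℚ)

/-- A graph is prolific if it is connected and isomorphic to no path graph `P_k`,
to no cycle graph `C_k`, and not to the star `K_{1,3}`. -/
def FGraph.Prolific (X : FGraph) : Prop :=
  X.G.Connected ∧
  (∀ k : ℕ, IsEmpty (X.G ≃g pathGraph k)) ∧
  (∀ k : ℕ, IsEmpty (X.G ≃g cycleGraph k)) ∧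
  IsEmpty (X.G ≃g completeBipartiteGraph (Fin 1) (Fin 3))

open Function.Embedding in
theorem card_line_map {V : Type} [Finite V] (H : SimpleGraph V) :
    Nat.card H.lineGraph.edgeSet =
      (H.lineGraph.map (subtype (fun x => x ∈ H.edgeSet))).edgeSet.ncard := by
  rw [SimpleGraph.edgeSet_map, Set.ncard_image_of_injective _ (Function.Embedding.injective _)]
  rfl

theorem exists_new_edge {V : Type} {G H : SimpleGraph V}
    (hc : G.Connected) (hne : H.edgeSet.Nonempty) (hG : ¬ G ≤ H) :
    ∃ u v w, G.Adj u v ∧ ¬ H.Adj u v ∧ H.Adj u w := by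
  by_contra! hcon
  apply hG
  obtain ⟨e, he⟩ := hne
  induction e with | _ a b =>
  have key : ∀ x, ∃ w, H.Adj x w := by
    intro x
    obtain ⟨p⟩ := hc.preconnected a x
    have hab : ∃ w, H.Adj a w := ⟨b, he⟩
    clear he
    induction p with
    | nil => exact hab
    | cons h p ih =>
      apply ih
      obtain ⟨w, hw⟩ := hab
      by_contra hx
      exact hcon _ _ w h (fun h' => hx ⟨_, h'.symm⟩) hw
  intro u v huv
  obtain ⟨w, hw⟩ := key u
  by_contra h
  exact hcon u v w huv h hw

theorem line_step {V : Type} [Finite V] {H : SimpleGraph V} {u v w : V}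
    (huv : u ≠ v) (hn : ¬ H.Adj u v) (hw : H.Adj u w) :
    Nat.card H.lineGraph.edgeSet + 1 ≤
      Nat.card (H ⊔ SimpleGraph.edge u v).lineGraph.edgeSet := by
  rw [card_line_map, card_line_map, Nat.add_one_le_iff]
  apply Set.ncard_lt_ncard _ (Set.toFinite _)
  rw [SimpleGraph.edgeSet_ssubset_edgeSet]
  refine lt_of_le_of_ne (map_lineGraph_le_of_le le_sup_left) ?_
  intro heq
  have hvw : s(u, v) ≠ s(u, w) := by
    intro h
    rw [Sym2.congr_right] at h
    exact hn (h ▸ hw)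
  have h1 : ((H ⊔ SimpleGraph.edge u v).lineGraph.map (Function.Embedding.subtype
      (fun x => x ∈ (H ⊔ SimpleGraph.edge u v).edgeSet))).Adj s(u, v) s(u, w) := by
    refine ⟨hvw, ⟨s(u, v), ?_⟩, ⟨s(u, w), ?_⟩, ?_, rfl, rfl⟩
    · simp [SimpleGraph.edge_adj, huv]
    · simp [hw]
    · rw [lineGraph_adj_iff_exists]
      exact ⟨fun h => hvw (congrArg Subtype.val h), u, by simp, by simp⟩
  rw [← heq] at h1
  obtain ⟨_, ⟨x, hx⟩, _, _, h2, _⟩ := h1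
  change x = s(u, v) at h2
  subst h2
  exact hn hx

theorem line_aux {V : Type} [Finite V] {G : SimpleGraph V} (hc : G.Connected) (n : ℕ) :
    ∀ H : SimpleGraph V, H ≤ G → H.edgeSet.Nonempty → G.edgeSet.ncard = H.edgeSet.ncard + n →
      Nat.card H.lineGraph.edgeSet + n ≤ Nat.card G.lineGraph.edgeSet := by
  induction n with
  | zero =>
    intro H hle _ hn
    have : H.edgeSet = G.edgeSet := Set.eq_of_subset_of_ncard_le
      (SimpleGraph.edgeSet_subset_edgeSet.2 hle) (by omega) (Set.toFinite _)
    rw [SimpleGraph.edgeSet_inj.1 this]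
    omega
  | succ n ih =>
    intro H hle hne hn
    have hG : ¬ G ≤ H := by
      intro h
      rw [le_antisymm hle h] at hn
      omega
    obtain ⟨u, v, w, h1, h2, h3⟩ := exists_new_edge hc hne hG
    have h4 := line_step h1.ne h2 h3
    have h5 : (H ⊔ SimpleGraph.edge u v).edgeSet = insert s(u, v) H.edgeSet := by
      rw [SimpleGraph.edgeSet_sup, SimpleGraph.edgeSet_edge_of_ne h1.ne, Set.union_singleton]
    have h6 := ih (H ⊔ SimpleGraph.edge u v)
      (sup_le hle ((SimpleGraph.edge_le_iff _).2 (Or.inr h1)))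
      (by rw [h5]; exact Set.insert_nonempty _ _)
      (by rw [h5, Set.ncard_insert_of_notMem (by simpa using h2) (Set.toFinite _)]; omega)
    omega

/-- If `G` is connected and `H` is a subgraph of `G` with at least one edge, then
`e(L(G)) - e(L(H)) ≥ e(G) - e(H)`. -/
theorem line_graph_edge_diff {V : Type} [Finite V] {G H : SimpleGraph V}
    (hc : G.Connected) (hle : H ≤ G) (hne : H.edgeSet.Nonempty) :
    (Nat.card G.lineGraph.edgeSet : ℤ) - (Nat.card H.lineGraph.edgeSet : ℤ) ≥
      (Nat.card G.edgeSet : ℤ) - (Nat.card H.edgeSet : ℤ) := by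
  have h1 : H.edgeSet.ncard ≤ G.edgeSet.ncard := Set.ncard_le_ncard
    (SimpleGraph.edgeSet_subset_edgeSet.2 hle) (Set.toFinite _)
  have h2 := line_aux hc (G.edgeSet.ncard - H.edgeSet.ncard) H hle hne (by omega)
  rw [Nat.card_coe_set_eq G.edgeSet, Nat.card_coe_set_eq H.edgeSet]
  omega
end

section
/- Let G be a prolific graph. Then e(L(G)) ≥ e(G), and equality holds if and only if G is a subdivision of K_{1,3}, i.e. G is a tree with exactly one vertex of degree 3 and all other vertices of degree 1 or 2. -/
open SimpleGraph

theorem pc_aux {V : Type} [Finite V] (G : SimpleGraph V) (hc : G.Connected)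
    (hd : ∀ v a b c, G.Adj v a → G.Adj v b → G.Adj v c → a = b ∨ a = c ∨ b = c) :
    ∃ k, Nonempty (G ≃g pathGraph k) ∨ Nonempty (G ≃g cycleGraph k) := by
  classical
  let P : ℕ → Prop := fun n => ∃ f : ℕ → V, (∀ i j, i < n → j < n → f i = f j → i = j) ∧
    ∀ i, i + 1 < n → G.Adj (f i) (f (i + 1))
  have hb : ∀ n, P n → n ≤ Nat.card V := by
    rintro n ⟨f, hf, -⟩
    have : Function.Injective (fun i : Fin n => f i) := fun i j h => Fin.ext (hf _ _ i.2 j.2 h)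
    simpa using Nat.card_le_card_of_injective _ this
  obtain ⟨v0⟩ := hc.nonempty
  have h1 : P 1 := ⟨fun _ => v0, by intros; omega, by intros; omega⟩
  have hV : 1 ≤ Nat.card V := hb 1 h1
  obtain ⟨n, hn1, ⟨f, hf, ha⟩, hmax⟩ : ∃ n, 1 ≤ n ∧ P n ∧ ¬ P (n+1) := by
    refine ⟨Nat.findGreatest P (Nat.card V), Nat.le_findGreatest hV h1,
      Nat.findGreatest_spec hV h1, fun h => ?_⟩
    have := Nat.le_findGreatest (hb _ h) h
    omega
  have hint : ∀ i w, 0 < i → i + 1 < n → G.Adj (f i) w → w = f (i-1) ∨ w = f (i+1) := by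
    intro i w h0 h1 hw
    have e1 := ha i h1
    have e2 := ha (i-1) (by omega)
    rw [show i - 1 + 1 = i by omega] at e2
    rcases hd _ _ _ _ hw e1 e2.symm with h | h | h
    · exact Or.inr h
    · exact Or.inl h
    · have := hf _ _ (by omega) (by omega) h
      omega
  have hlast : ∀ w, G.Adj (f (n-1)) w → ∃ j < n, w = f j := by
    intro w hw
    by_contra! hcon
    refine hmax ⟨fun i => if i < n then f i else w, ?_, ?_⟩
    · intro i j hi hj
      grind
    · intro i hi
      by_cases h : i + 1 < n
      · simpa [h, show i < n by omega] using ha i h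
      · have : i = n - 1 := by omega
        subst this
        simpa [show n - 1 < n by omega, h] using hw
  have hfirst : ∀ w, G.Adj (f 0) w → ∃ j < n, w = f j := by
    intro w hw
    by_contra! hcon
    refine hmax ⟨fun i => if i = 0 then w else f (i-1), ?_, ?_⟩
    · intro i j hi hj
      have := hf (i-1) (j-1)
      grind
    · intro i hi
      rcases i with _ | i
      · simpa using hw.symm
      · simpa using ha i (by omega)
  have himg : ∀ i w, i < n → G.Adj (f i) w → ∃ j < n, w = f j := by
    intro i w hi hw
    by_cases h0 : i = 0
    · exact hfirst w (h0 ▸ hw)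
    by_cases h1 : i = n - 1
    · exact hlast w (h1 ▸ hw)
    rcases hint i w (by omega) (by omega) hw with h | h
    · exact ⟨_, by omega, h⟩
    · exact ⟨_, by omega, h⟩
  have hadj : ∀ i j, i < n → j < n → G.Adj (f i) (f j) →
      j = i + 1 ∨ i = j + 1 ∨ (i = 0 ∧ j = n - 1) ∨ (j = 0 ∧ i = n - 1) := by
    intro i j hi hj hw
    have hne : i ≠ j := by rintro rfl; exact G.irrefl hw
    by_cases h : 0 < i ∧ i + 1 < n
    · rcases hint i _ h.1 h.2 hw with h | h
      · have := hf _ _ (by omega) (by omega) h; omega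
      · have := hf _ _ (by omega) (by omega) h; omega
    by_cases h : 0 < j ∧ j + 1 < n
    · rcases hint j _ h.1 h.2 hw.symm with h | h
      · have := hf _ _ (by omega) (by omega) h; omega
      · have := hf _ _ (by omega) (by omega) h; omega
    omega
  have hsurj : ∀ v, ∃ j < n, v = f j := by
    intro v
    obtain ⟨p⟩ := hc.preconnected (f 0) v
    have : ∀ (a b : V) (p : G.Walk a b), (∃ j < n, a = f j) → ∃ j < n, b = f j := by
      intro a b p
      induction p with
      | nil => exact id
      | cons h p ih =>
        rintro ⟨j, hj, rfl⟩
        exact ih (himg j _ hj h)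
    exact this _ _ p ⟨0, by omega, rfl⟩
  let e : Fin n ≃ V := Equiv.ofBijective (fun i => f i)
    ⟨fun i j h => Fin.ext (hf _ _ i.2 j.2 h), fun v => by
      obtain ⟨j, hj, rfl⟩ := hsurj v
      exact ⟨⟨j, hj⟩, rfl⟩⟩
  have he : ∀ i, e i = f i := fun _ => rfl
  refine ⟨n, ?_⟩
  by_cases hcy : 3 ≤ n ∧ G.Adj (f 0) (f (n-1))
  · right
    refine ⟨RelIso.symm ⟨e, ?_⟩⟩
    rintro ⟨i, hi⟩ ⟨j, hj⟩
    obtain ⟨hn3, hcy⟩ := hcy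
    have hval : ∀ i j (hi : i < n) (hj : j < n), ((⟨i, hi⟩ : Fin n) - ⟨j, hj⟩).val = 1 ↔
        (i = j + 1 ∨ (i = 0 ∧ j = n - 1)) := by
      intro i j hi hj
      rcases le_or_gt j i with h | h
      · rw [Fin.coe_sub_iff_le.mpr (show (⟨j, hj⟩ : Fin n) ≤ ⟨i, hi⟩ from h)]
        simp only
        omega
      · rw [Fin.coe_sub_iff_lt.mpr (show (⟨i, hi⟩ : Fin n) < ⟨j, hj⟩ from h)]
        simp only
        omega
    rw [he, he, cycleGraph_adj', hval, hval]
    simp only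
    constructor
    · intro h
      have := hadj i j hi hj h
      tauto
    · rintro ((h | ⟨h, h'⟩) | (h | ⟨h, h'⟩))
      · rw [h]; exact (ha _ (by omega)).symm
      · rw [h, h']; exact hcy
      · rw [h]; exact (ha _ (by omega))
      · rw [h, h']; exact hcy.symm
  · left
    refine ⟨RelIso.symm ⟨e, ?_⟩⟩
    rintro ⟨i, hi⟩ ⟨j, hj⟩
    rw [he, he, pathGraph_adj]
    simp only
    constructor
    · intro h
      have hne : i ≠ j := by rintro rfl; exact G.irrefl h
      by_cases h3 : 3 ≤ n
      · rcases hadj i j hi hj h with h' | h' | ⟨h', h''⟩ | ⟨h', h''⟩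
        · omega
        · omega
        · exact absurd ⟨h3, by rw [← h', ← h'']; exact h⟩ hcy
        · exact absurd ⟨h3, by rw [← h', ← h'']; exact h.symm⟩ hcy
      · omega
    · rintro (rfl | rfl)
      · exact ha _ hj
      · exact (ha _ hi).symm

theorem cnt_aux {V : Type} [Fintype V] [DecidableEq V] (G : SimpleGraph V) [DecidableRel G.Adj] :
    2 * Nat.card G.lineGraph.edgeSet = ∑ v, G.degree v * (G.degree v - 1) := by
  classical
  let T := Σ v : V, {p : V × V // p ∈ (G.neighborFinset v).offDiag}
  have hT : Fintype.card T = ∑ v, G.degree v * (G.degree v - 1) := by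
    simp only [T, Fintype.card_sigma, Fintype.card_coe, Finset.offDiag_card, card_neighborFinset_eq_degree]
    refine Finset.sum_congr rfl fun v _ => ?_
    rw [Nat.mul_sub, mul_one]
  rw [← hT, Nat.card_eq_fintype_card, ← edgeFinset_card, ← dart_card_eq_twice_card_edges]
  symm
  have hp : ∀ t : T, G.Adj t.1 t.2.1.1 ∧ G.Adj t.1 t.2.1.2 ∧ t.2.1.1 ≠ t.2.1.2 := by
    rintro ⟨v, ⟨a, b⟩, h⟩
    simpa using h
  let F : T → G.lineGraph.Dart := fun t =>
    ⟨(⟨s(t.1, t.2.1.1), (hp t).1⟩, ⟨s(t.1, t.2.1.2), (hp t).2.1⟩), by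
      have := (hp t).2.2
      refine ⟨fun h => this (Sym2.congr_right.mp (congrArg Subtype.val h)), t.1, by simp⟩⟩
  refine Fintype.card_of_bijective (f := F) ⟨?_, ?_⟩
  · rintro ⟨v, ⟨a, b⟩, h⟩ ⟨v', ⟨a', b'⟩, h'⟩ hh
    have h1 : a ≠ b := (hp ⟨v, ⟨a, b⟩, h⟩).2.2
    have g1 : s(v, a) = s(v', a') := congrArg (fun d : G.lineGraph.Dart => (d.fst : Sym2 V)) hh
    have g2 : s(v, b) = s(v', b') := congrArg (fun d : G.lineGraph.Dart => (d.snd : Sym2 V)) hh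
    have : v = v' ∧ a = a' ∧ b = b' := by
      simp only [Sym2.eq_iff] at g1 g2
      grind
    obtain ⟨rfl, rfl, rfl⟩ := this
    rfl
  · rintro ⟨⟨⟨e1, h1⟩, ⟨e2, h2⟩⟩, hne, v, hv1, hv2⟩
    change v ∈ e1 at hv1
    change v ∈ e2 at hv2
    obtain ⟨a, rfl⟩ := Sym2.mem_iff_exists.mp hv1
    obtain ⟨b, rfl⟩ := Sym2.mem_iff_exists.mp hv2
    refine ⟨⟨v, ⟨a, b⟩, ?_⟩, rfl⟩
    simp only [Finset.mem_offDiag, mem_neighborFinset]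
    refine ⟨h1, h2, ?_⟩
    rintro rfl
    exact hne rfl

/-- For a prolific graph, `e(L(G)) ≥ e(G)`, with equality iff `G` is a subdivision of
`K_{1,3}`, i.e. a tree with exactly one vertex of degree `3` and all other vertices of
degree `1` or `2`. -/
theorem line_graph_edges_ge (X : FGraph) [Finite X.V] (hp : X.Prolific) :
    X.line.e ≥ X.e ∧
      (X.line.e = X.e ↔
        X.G.IsTree ∧ (∃! v : X.V, X.deg v = 3) ∧
          ∀ v : X.V, X.deg v ≠ 3 → X.deg v = 1 ∨ X.deg v = 2) := by
  classical
  obtain ⟨hc, hpath, hcyc, -⟩ := hp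
  obtain ⟨V, G⟩ := X
  simp only [FGraph.e, FGraph.line, FGraph.deg] at *
  have := Fintype.ofFinite V
  have hdeg : ∀ v, Nat.card (G.neighborSet v) = G.degree v := fun v => by
    rw [Nat.card_eq_fintype_card, card_neighborSet_eq_degree]
  simp only [hdeg]
  -- a vertex of degree at least three
  obtain ⟨u, hu⟩ : ∃ u, 3 ≤ G.degree u := by
    by_contra! hlt
    obtain ⟨k, h | h⟩ := pc_aux G hc (by
      intro v a b c ha hb hc'
      by_contra! hne
      have h3 : ({a, b, c} : Finset V).card = 3 := Finset.card_eq_three.mpr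
        ⟨a, b, c, hne.1, hne.2.1, hne.2.2, rfl⟩
      have hs : ({a, b, c} : Finset V) ⊆ G.neighborFinset v := by
        intro x hx
        simp only [Finset.mem_insert, Finset.mem_singleton] at hx
        rw [mem_neighborFinset]
        rcases hx with rfl | rfl | rfl <;> assumption
      have := Finset.card_le_card hs
      have := hlt v
      rw [card_neighborFinset_eq_degree] at *
      omega)
    · exact (hpath k).false h.some
    · exact (hcyc k).false h.some
  have hcnt := cnt_aux G
  have hsum := G.sum_degrees_eq_twice_card_edges
  rw [edgeFinset_card, ← Nat.card_eq_fintype_card] at hsum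
  have hle := hc.card_vert_le_card_edgeSet_add_one
  have htree : G.IsTree ↔ Nat.card G.edgeSet + 1 = Nat.card V := by
    rw [isTree_iff_connected_and_card]; simp [hc]
  rw [htree]
  set L := Nat.card G.lineGraph.edgeSet
  set E := Nat.card G.edgeSet
  let g : V → ℤ := fun v => ((G.degree v : ℤ) - 1) * ((G.degree v : ℤ) - 2)
  have hg : ∀ v, 0 ≤ g v := by
    intro v
    rcases Nat.lt_or_ge (G.degree v) 2 with h | h
    · have : G.degree v = 0 ∨ G.degree v = 1 := by omega
      rcases this with h | h <;> simp [g, h]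
    · exact mul_nonneg (by omega) (by omega)
  have hS : ∑ v, g v = 2 * L - 4 * E + 2 * Nat.card V := by
    have h1 : (2 * L : ℤ) = ∑ v, (G.degree v : ℤ) * ((G.degree v : ℤ) - 1) := by
      have : ((2 * L : ℕ) : ℤ) = ((∑ v, G.degree v * (G.degree v - 1) : ℕ) : ℤ) := by rw [hcnt]
      push_cast at this
      rw [this]
      refine Finset.sum_congr rfl fun v _ => ?_
      rcases Nat.eq_zero_or_pos (G.degree v) with h | h
      · simp [h]
      · rw [Nat.cast_sub h]; simp
    have h2 : (2 * E : ℤ) = ∑ v, (G.degree v : ℤ) := by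
      exact_mod_cast hsum.symm
    have h3 : (2 * Nat.card V : ℤ) = ∑ v : V, (2 : ℤ) := by
      simp [mul_comm]
    rw [show (2 * L - 4 * E + 2 * Nat.card V : ℤ) = 2 * L - 2 * (2 * E) + 2 * Nat.card V by ring,
      h1, h2, h3, Finset.mul_sum, ← Finset.sum_sub_distrib, ← Finset.sum_add_distrib]
    refine Finset.sum_congr rfl fun v _ => ?_
    simp only [g]
    ring
  have hsplit : ∑ v, g v = g u + ∑ v ∈ Finset.univ.erase u, g v :=
    (Finset.add_sum_erase _ _ (Finset.mem_univ u)).symm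
  have hR : 0 ≤ ∑ v ∈ Finset.univ.erase u, g v := Finset.sum_nonneg fun v _ => hg v
  have hgu : 2 ≤ g u := by
    have : (3 : ℤ) ≤ G.degree u := by exact_mod_cast hu
    simp only [g]
    nlinarith
  refine ⟨by omega, ?_, ?_⟩
  · intro hLE
    have hR0 : ∑ v ∈ Finset.univ.erase u, g v = 0 := by omega
    have hgu2 : g u = 2 := by omega
    have hu3 : G.degree u = 3 := by
      have : (3 : ℤ) ≤ G.degree u := by exact_mod_cast hu
      simp only [g] at hgu2
      have : (G.degree u : ℤ) ≤ 3 := by nlinarith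
      omega
    have hoth : ∀ v, v ≠ u → G.degree v = 1 ∨ G.degree v = 2 := by
      intro v hv
      have := (Finset.sum_eq_zero_iff_of_nonneg fun v _ => hg v).mp hR0 v (by simp [hv])
      rcases mul_eq_zero.mp this with h | h
      · left; omega
      · right; omega
    refine ⟨by omega, ⟨u, hu3, ?_⟩, ?_⟩
    · intro v hv
      by_contra hne
      rcases hoth v hne with h | h <;> omega
    · intro v hv
      exact hoth v (by rintro rfl; exact hv hu3)
  · rintro ⟨ht, ⟨w, hw, huniq⟩, hoth⟩
    have hu3 : G.degree u = 3 := by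
      by_contra h
      have := hoth u h
      omega
    have hR0 : ∑ v ∈ Finset.univ.erase u, g v = 0 := by
      refine Finset.sum_eq_zero fun v hv => ?_
      have hne : v ≠ u := Finset.ne_of_mem_erase hv
      have : G.degree v ≠ 3 := fun h => hne ((huniq v h).trans (huniq u hu3).symm)
      rcases hoth v this with h | h <;> simp [g, h]
    have hgu2 : g u = 2 := by simp [g, hu3]
    omega
end

section
/- Let G be a prolific graph. Then e(L^2(G)) ≥ e(G) + 1. -/
open SimpleGraph

theorem aux_classify {V : Type} [Finite V] (G : SimpleGraph V) (hc : G.Connected)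
    (h3 : ∀ v a b c, G.Adj v a → G.Adj v b → G.Adj v c → a = b ∨ a = c ∨ b = c) :
    ∃ k : ℕ, Nonempty (G ≃g pathGraph k) ∨ Nonempty (G ≃g cycleGraph k) := by
  classical
  have := Fintype.ofFinite V
  let P : ℕ → Prop := fun k => ∃ f : ℕ → V, (∀ i ≤ k, ∀ j ≤ k, f i = f j → i = j) ∧
    ∀ i < k, G.Adj (f i) (f (i+1))
  have hP0 : P 0 := by
    obtain ⟨v⟩ := hc.nonempty
    exact ⟨fun _ => v, by intros; omega, by intros; omega⟩
  have hbd : ∀ k, P k → k ≤ Fintype.card V := by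
    rintro k ⟨f, hf, -⟩
    have := Fintype.card_le_of_injective (fun i : Fin (k+1) => f i)
      (fun i j h => Fin.ext (hf i (by omega) j (by omega) h))
    simp at this
    omega
  obtain ⟨k, hk, hmax⟩ : ∃ k, P k ∧ ¬ P (k+1) := by
    by_contra! hcon
    have : ∀ k, P k := fun k => by
      induction k with
      | zero => exact hP0
      | succ n ih => exact hcon n ih
    have := hbd _ (this (Fintype.card V + 1))
    omega
  obtain ⟨f, hf, ha⟩ := hk
  have hend : ∀ w, G.Adj (f k) w → ∃ i ≤ k, f i = w := by
    intro w hw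
    by_contra! hcon
    apply hmax
    refine ⟨fun i => if i ≤ k then f i else w, ?_, ?_⟩
    · intro i hi j hj h
      by_cases h1 : i ≤ k <;> by_cases h2 : j ≤ k <;> simp [h1, h2] at h
      · exact hf i h1 j h2 h
      · exact absurd h (hcon i h1)
      · exact absurd h.symm (hcon j h2)
      · omega
    · intro i hi
      by_cases h1 : i < k
      · simp [show i ≤ k by omega, show i + 1 ≤ k by omega, ha i h1]
      · obtain rfl : i = k := by omega
        simpa using hw
  have hstart : ∀ w, G.Adj (f 0) w → ∃ i ≤ k, f i = w := by
    intro w hw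
    by_contra! hcon
    apply hmax
    refine ⟨fun i => if i = 0 then w else f (i-1), ?_, ?_⟩
    · intro i hi j hj h
      by_cases h1 : i = 0 <;> by_cases h2 : j = 0 <;> simp [h1, h2] at h
      · omega
      · exact absurd h.symm (hcon (j-1) (by omega))
      · exact absurd h (hcon (i-1) (by omega))
      · have := hf (i-1) (by omega) (j-1) (by omega) h
        omega
    · intro i hi
      by_cases h1 : i = 0
      · subst h1
        simpa using hw.symm
      · have := ha (i-1) (by omega)
        rw [show i - 1 + 1 = i by omega] at this
        simpa [h1] using this
  have hmid : ∀ i, 0 < i → i < k → ∀ w, G.Adj (f i) w → w = f (i-1) ∨ w = f (i+1) := by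
    intro i h0 hik w hw
    have h1 := ha (i-1) (by omega)
    rw [show i - 1 + 1 = i by omega] at h1
    have h2 := ha i hik
    rcases h3 _ _ _ _ h1.symm h2 hw with h | h | h
    · have := hf _ (by omega) _ (by omega) h
      omega
    · exact Or.inl h.symm
    · exact Or.inr h.symm
  have hcl : ∀ i ≤ k, ∀ w, G.Adj (f i) w → ∃ j ≤ k, f j = w := by
    intro i hi w hw
    by_cases h0 : i = 0
    · subst h0; exact hstart w hw
    by_cases h1 : i = k
    · subst h1; exact hend w hw
    rcases hmid i (by omega) (by omega) w hw with h | h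
    · exact ⟨i-1, by omega, h.symm⟩
    · exact ⟨i+1, by omega, h.symm⟩
  have hsurj : ∀ w, ∃ j ≤ k, f j = w := by
    intro w
    obtain ⟨p⟩ := hc.preconnected (f 0) w
    have key : ∀ (u w : V) (p : G.Walk u w), (∃ j ≤ k, f j = u) → ∃ j ≤ k, f j = w := by
      intro u w p
      induction p with
      | nil => exact id
      | cons h p ih =>
        rintro ⟨j, hj, rfl⟩
        exact ih (hcl j hj _ h)
    exact key _ _ p ⟨0, by omega, rfl⟩
  have hadj : ∀ i ≤ k, ∀ j ≤ k, i < j → G.Adj (f i) (f j) → j = i + 1 ∨ (i = 0 ∧ j = k) := by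
    intro i hi j hj hij h
    by_contra! hcon
    obtain ⟨c1, c2⟩ := hcon
    by_cases h0 : i = 0
    · have := c2 h0
      rcases hmid j (by omega) (by omega) _ h.symm with h | h
      · have := hf _ (by omega) _ (by omega) h
        omega
      · have := hf _ (by omega) _ (by omega) h
        omega
    · rcases hmid i (by omega) (by omega) _ h with h | h
      · have := hf _ (by omega) _ (by omega) h
        omega
      · have := hf _ (by omega) _ (by omega) h
        omega
  let F : Fin (k+1) ≃ V := Equiv.ofBijective (fun i => f i)
    ⟨fun i j h => Fin.ext (hf i (by omega) j (by omega) h), fun w => by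
      obtain ⟨j, hj, h⟩ := hsurj w
      exact ⟨⟨j, by omega⟩, h⟩⟩
  have hF : ∀ i, F i = f i := fun i => rfl
  refine ⟨k+1, ?_⟩
  by_cases hcyc : 2 ≤ k ∧ G.Adj (f 0) (f k)
  · right
    refine ⟨(RelIso.symm ⟨F, ?_⟩)⟩
    intro i j
    rw [hF, hF, cycleGraph_adj']
    have e1 : (i - j).val = 1 ↔ (i.val = j.val + 1 ∨ (i.val = 0 ∧ j.val = k)) := by
      rcases le_or_gt j i with h | h
      · rw [Fin.sub_val_of_le h]
        rw [Fin.le_def] at h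
        omega
      · rw [Fin.coe_sub_iff_lt.2 h]
        rw [Fin.lt_def] at h
        omega
    have e2 : (j - i).val = 1 ↔ (j.val = i.val + 1 ∨ (j.val = 0 ∧ i.val = k)) := by
      rcases le_or_gt i j with h | h
      · rw [Fin.sub_val_of_le h]
        rw [Fin.le_def] at h
        omega
      · rw [Fin.coe_sub_iff_lt.2 h]
        rw [Fin.lt_def] at h
        omega
    rw [e1, e2]
    constructor
    · intro h
      rcases lt_trichotomy i.val j.val with hl | hl | hl
      · have := hadj i (by omega) j (by omega) hl h
        omega
      · rw [hl] at h
        exact absurd h (G.loopless.irrefl _)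
      · have := hadj j (by omega) i (by omega) hl h.symm
        omega
    · rintro ((h | ⟨h, h'⟩) | (h | ⟨h, h'⟩))
      · rw [h]; exact (ha _ (by omega)).symm
      · rw [h, h']; exact hcyc.2
      · rw [h]; exact (ha _ (by omega))
      · rw [h, h']; exact hcyc.2.symm
  · left
    refine ⟨(RelIso.symm ⟨F, ?_⟩)⟩
    intro i j
    rw [hF, hF, pathGraph_adj]
    constructor
    · intro h
      rcases lt_trichotomy i.val j.val with hl | hl | hl
      · rcases hadj i (by omega) j (by omega) hl h with h' | ⟨h', h''⟩
        · omega
        · by_cases h2 : 2 ≤ k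
          · rw [h', h''] at h
            exact absurd ⟨h2, h⟩ hcyc
          · omega
      · rw [hl] at h
        exact absurd h (G.loopless.irrefl _)
      · rcases hadj j (by omega) i (by omega) hl h.symm with h' | ⟨h', h''⟩
        · omega
        · by_cases h2 : 2 ≤ k
          · rw [h', h''] at h
            exact absurd ⟨h2, h.symm⟩ hcyc
          · omega
    · rintro (h | h)
      · rw [← h]; exact (ha _ (by omega))
      · rw [← h]; exact (ha _ (by omega)).symm

theorem aux_line {V : Type} [Fintype V] (G : SimpleGraph V) [∀ v, Fintype (G.neighborSet v)] :
    ∑ v, (G.degree v).choose 2 ≤ Nat.card G.lineGraph.edgeSet := by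
  classical
  have hcard : ∑ v, (G.degree v).choose 2 =
      Nat.card (Σ v : V, {s : Sym2 (G.neighborSet v) // ¬ s.IsDiag}) := by
    rw [Nat.card_eq_fintype_card, Fintype.card_sigma]
    refine Finset.sum_congr rfl fun v _ => ?_
    rw [Sym2.card_subtype_not_diag, G.card_neighborSet_eq_degree]
  rw [hcard]
  let E : ∀ v : V, G.neighborSet v → G.edgeSet := fun v a => ⟨s(v, a), a.2⟩
  have hE : ∀ v, Function.Injective (E v) := by
    intro v a b h
    have : s(v, (a : V)) = s(v, b) := congrArg Subtype.val h
    exact Subtype.ext (Sym2.congr_right.1 this)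
  have hmem : ∀ x : (Σ v : V, {s : Sym2 (G.neighborSet v) // ¬ s.IsDiag}),
      Sym2.map (E x.1) x.2.1 ∈ G.lineGraph.edgeSet := by
    rintro ⟨v, s, hs⟩
    induction s with | _ a b
    simp only [Sym2.map_mk, mem_edgeSet, lineGraph_adj_iff_exists]
    refine ⟨fun h => hs ?_, v, ?_, ?_⟩
    · simpa using hE v h
    · simp [E]
    · simp [E]
  refine Nat.card_le_card_of_injective (fun x => (⟨_, hmem x⟩ : G.lineGraph.edgeSet)) ?_
  rintro ⟨v, s, hs⟩ ⟨w, t, ht⟩ h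
  have h : Sym2.map (E v) s = Sym2.map (E w) t := congrArg Subtype.val h
  have hvw : v = w := by
    induction s with | _ a b
    induction t with | _ c d
    have hab : (a : V) ≠ b := fun h => hs (by simpa using Subtype.ext h)
    simp only [Sym2.map_mk] at h
    have h1 : w ∈ s(v, (a : V)) ∧ w ∈ s(v, (b : V)) := by
      have : ∀ e ∈ s(E v a, E v b), w ∈ e.1 := by
        rw [h]
        intro e he
        rcases Sym2.mem_iff.1 he with rfl | rfl <;> simp [E]
      exact ⟨this (E v a) (by simp), this (E v b) (by simp)⟩
    simp only [Sym2.mem_iff] at h1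
    grind
  subst hvw
  have := Sym2.map.injective (hE v) h
  subst this
  rfl

theorem aux_deg {V : Type} [Finite V] (G : SimpleGraph V) (v a b c : V)
    (ha : G.Adj v a) (hb : G.Adj v b) (hc : G.Adj v c) (hab : a ≠ b) (hac : a ≠ c) (hbc : b ≠ c) :
    2 * Nat.card G.edgeSet + 1 ≤ Nat.card G.lineGraph.edgeSet + Nat.card V := by
  classical
  have := Fintype.ofFinite V
  have h1 := aux_line G
  have h2 := G.sum_degrees_eq_twice_card_edges
  have h3 : Nat.card G.edgeSet = G.edgeFinset.card := by
    rw [Nat.card_eq_fintype_card, edgeFinset_card]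
  have hd : 3 ≤ G.degree v := by
    have : ({a, b, c} : Finset V) ⊆ G.neighborFinset v := by
      intro x hx
      simp at hx
      rcases hx with rfl | rfl | rfl <;> simpa
    have := Finset.card_le_card this
    rwa [Finset.card_eq_three.2 ⟨a, b, c, hab, hac, hbc, rfl⟩] at this
  have hch : ∀ d : ℕ, d ≤ d.choose 2 + 1 := by
    intro d
    rcases d with _ | d
    · simp
    · rw [Nat.choose_succ_succ' d 1]; simp
  have hch3 : ∀ d : ℕ, 3 ≤ d → d < d.choose 2 + 1 := by
    intro d hd
    obtain ⟨d, rfl⟩ : ∃ e, d = e + 1 := ⟨d-1, by omega⟩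
    rw [Nat.choose_succ_succ' d 1]
    have := Nat.choose_pos (n := d) (k := 2) (by omega)
    simp
    omega
  have h4 : ∑ v, G.degree v < ∑ v, ((G.degree v).choose 2 + 1) :=
    Finset.sum_lt_sum (fun i _ => hch _) ⟨v, Finset.mem_univ _, hch3 _ hd⟩
  rw [Finset.sum_add_distrib] at h4
  simp at h4
  rw [Nat.card_eq_fintype_card (α := V)]
  omega

theorem aux_main {V : Type} [Finite V] (G : SimpleGraph V) (hc : G.Connected)
    (hp : ∀ k : ℕ, IsEmpty (G ≃g pathGraph k)) (hcy : ∀ k : ℕ, IsEmpty (G ≃g cycleGraph k))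
    (hs : IsEmpty (G ≃g completeBipartiteGraph (Fin 1) (Fin 3))) :
    Nat.card G.edgeSet + 1 ≤ Nat.card G.lineGraph.lineGraph.edgeSet := by
  classical
  have h3 : ∃ v a b c, G.Adj v a ∧ G.Adj v b ∧ G.Adj v c ∧ a ≠ b ∧ a ≠ c ∧ b ≠ c := by
    by_contra! hcon
    obtain ⟨k, ⟨h⟩ | ⟨h⟩⟩ := aux_classify G hc (by
      intro v a b c h1 h2 h3
      by_contra! h
      exact h.2.2 (hcon v a b c h1 h2 h3 h.1 h.2.1))
    · exact (hp k).false h.some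
    · exact (hcy k).false h.some
  obtain ⟨v, a, b, c, ha, hb, hcc, hab, hac, hbc⟩ := h3
  have k1 := aux_deg G v a b c ha hb hcc hab hac hbc
  have k2 := hc.card_vert_le_card_edgeSet_add_one
  -- a vertex of degree at least three in the line graph
  have k3 : ∃ e e1 e2 e3, G.lineGraph.Adj e e1 ∧ G.lineGraph.Adj e e2 ∧ G.lineGraph.Adj e e3 ∧
      e1 ≠ e2 ∧ e1 ≠ e3 ∧ e2 ≠ e3 := by
    have step : ∀ a b c x y, G.Adj v a → G.Adj v b → G.Adj v c → a ≠ b → a ≠ c → b ≠ c →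
        G.Adj x y → (x = v ∨ x = a) → s(x, y) ≠ s(v, a) → s(x, y) ≠ s(v, b) →
        s(x, y) ≠ s(v, c) → 
        ∃ e e1 e2 e3, G.lineGraph.Adj e e1 ∧ G.lineGraph.Adj e e2 ∧ G.lineGraph.Adj e e3 ∧
      e1 ≠ e2 ∧ e1 ≠ e3 ∧ e2 ≠ e3 := by
      intro a b c x y ha hb hc hab hac hbc hxy hx n1 n2 n3
      refine ⟨⟨s(v, a), ha⟩, ⟨s(v, b), hb⟩, ⟨s(v, c), hc⟩, ⟨s(x, y), hxy⟩, ?_, ?_, ?_, ?_, ?_, ?_⟩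
      · rw [lineGraph_adj_iff_exists]
        exact ⟨fun h => hab (Sym2.congr_right.1 (congrArg Subtype.val h)), v, by simp, by simp⟩
      · rw [lineGraph_adj_iff_exists]
        exact ⟨fun h => hac (Sym2.congr_right.1 (congrArg Subtype.val h)), v, by simp, by simp⟩
      · rw [lineGraph_adj_iff_exists]
        exact ⟨fun h => n1 (congrArg Subtype.val h).symm, x, by simpa using hx, by simp⟩
      · exact fun h => hbc (Sym2.congr_right.1 (congrArg Subtype.val h))
      · exact fun h => n2 (congrArg Subtype.val h).symm
      · exact fun h => n3 (congrArg Subtype.val h).symm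
    by_contra hno
    have hv : ∀ w, G.Adj v w → w = a ∨ w = b ∨ w = c := by
      intro w hw
      by_contra! h
      refine hno (step a b c v w ha hb hcc hab hac hbc hw (Or.inl rfl) ?_ ?_ ?_) <;>
      · rw [Ne, Sym2.congr_right]
        tauto
    have hleaf : ∀ a b c, G.Adj v a → G.Adj v b → G.Adj v c → a ≠ b → a ≠ c → b ≠ c →
        ∀ w, G.Adj a w → w = v := by
      intro a b c ha hb hc hab hac hbc w hw
      by_contra h
      have := ha.ne
      have := hb.ne
      have := hc.ne
      refine hno (step a b c a w ha hb hc hab hac hbc hw (Or.inr rfl) ?_ ?_ ?_) <;>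
      · simp only [Ne, Sym2.eq_iff]
        tauto
    have la := hleaf a b c ha hb hcc hab hac hbc
    have lb := hleaf b a c hb ha hcc hab.symm hbc hac
    have lc := hleaf c a b hcc ha hb hac.symm hbc.symm hab
    have hall : ∀ w, w = v ∨ w = a ∨ w = b ∨ w = c := by
      intro w
      obtain ⟨p⟩ := hc.preconnected v w
      have key : ∀ (u w : V) (p : G.Walk u w), (u = v ∨ u = a ∨ u = b ∨ u = c) →
          (w = v ∨ w = a ∨ w = b ∨ w = c) := by
        intro u w p
        induction p with
        | nil => exact id
        | cons h p ih =>
          intro hu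
          apply ih
          rcases hu with rfl | rfl | rfl | rfl
          · exact Or.inr (hv _ h)
          · exact Or.inl (la _ h)
          · exact Or.inl (lb _ h)
          · exact Or.inl (lc _ h)
      exact key _ _ p (Or.inl rfl)
    let f : Fin 1 ⊕ Fin 3 → V := Sum.elim (fun _ => v) ![a, b, c]
    have hva := ha.ne
    have hvb := hb.ne
    have hvc := hcc.ne
    have hf : Function.Bijective f := by
      constructor
      · rintro (i | i) (j | j) h <;> fin_cases i <;> fin_cases j <;> simp [f] at h ⊢ <;>
          first | exact absurd h (by assumption) | exact absurd h.symm (by assumption)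
      · intro w
        rcases hall w with rfl | rfl | rfl | rfl
        · exact ⟨Sum.inl 0, rfl⟩
        · exact ⟨Sum.inr 0, rfl⟩
        · exact ⟨Sum.inr 1, rfl⟩
        · exact ⟨Sum.inr 2, rfl⟩
    refine hs.false (RelIso.symm ⟨Equiv.ofBijective f hf, ?_⟩)
    have nab : ¬ G.Adj a b := fun h => hvb (la _ h).symm
    have nac : ¬ G.Adj a c := fun h => hvc (la _ h).symm
    have nbc : ¬ G.Adj b c := fun h => hvc (lb _ h).symm
    rintro (i | i) (j | j) <;> fin_cases i <;> fin_cases j <;>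
      simp [f, completeBipartiteGraph, ha, hb, hcc, ha.symm, hb.symm, hcc.symm, nab, nac, nbc,
        G.adj_comm b a, G.adj_comm c a, G.adj_comm c b]
  obtain ⟨e, e1, e2, e3, m1, m2, m3, m4, m5, m6⟩ := k3
  have k4 := aux_deg G.lineGraph e e1 e2 e3 m1 m2 m3 m4 m5 m6
  omega

/-- For a prolific graph, `e(L²(G)) ≥ e(G) + 1`. -/
theorem edges_iter_two (X : FGraph) [Finite X.V] (hp : X.Prolific) :
    (X.iter 2).e ≥ X.e + 1 := by
  obtain ⟨h1, h2, h3, h4⟩ := hp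
  exact aux_main X.G h1 h2 h3 h4
end

section
/- Let G be a prolific graph. Then e(L^3(G)) ≥ e(G) + 4. -/
open SimpleGraph

section aux
open Finset Classical

theorem deg_line {V : Type*} [Fintype V] (K : SimpleGraph V) (u v : V) (h : K.Adj u v) :
    K.lineGraph.degree ⟨s(u,v), h⟩ + 2 = K.degree u + K.degree v := by
  have h1 : (K.lineGraph.neighborFinset ⟨s(u,v), h⟩).map (Function.Embedding.subtype _)
      = (K.incidenceFinset u ∪ K.incidenceFinset v).erase s(u,v) := by
    ext e
    simp only [mem_map, mem_neighborFinset, lineGraph_adj_iff_exists, Function.Embedding.subtype_apply,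
      mem_erase, mem_union, mem_incidenceFinset, incidenceSet, Set.mem_ofPred_eq, Sym2.mem_iff]
    constructor
    · rintro ⟨⟨a, ha⟩, ⟨hne, w, hw, hw'⟩, rfl⟩
      refine ⟨fun h => hne (Subtype.ext h.symm), ?_⟩
      rcases hw with rfl | rfl
      · exact Or.inl ⟨ha, hw'⟩
      · exact Or.inr ⟨ha, hw'⟩
    · rintro ⟨hne, h | h⟩
      · exact ⟨⟨e, h.1⟩, ⟨fun h => hne (congrArg Subtype.val h).symm, u, Or.inl rfl, h.2⟩, rfl⟩
      · exact ⟨⟨e, h.1⟩, ⟨fun h => hne (congrArg Subtype.val h).symm, v, Or.inr rfl, h.2⟩, rfl⟩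
  have h2 : K.incidenceFinset u ∩ K.incidenceFinset v = {s(u,v)} := by
    have := K.incidenceSet_inter_incidenceSet_of_adj h
    ext e
    have := Set.ext_iff.1 this e
    simpa using this
  have h3 := card_union_add_card_inter (K.incidenceFinset u) (K.incidenceFinset v)
  rw [h2, card_incidenceFinset_eq_degree, card_incidenceFinset_eq_degree, card_singleton] at h3
  have h4 := congrArg card h1
  have h5 : s(u,v) ∈ K.incidenceFinset u ∪ K.incidenceFinset v := by
    simp [incidenceSet, h]
  rw [card_map, card_neighborFinset_eq_degree, card_erase_of_mem h5] at h4
  have : 0 < #(K.incidenceFinset u ∪ K.incidenceFinset v) := card_pos.2 ⟨_, h5⟩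
  omega

theorem sum_deg_line {V : Type*} [Fintype V] (K : SimpleGraph V) :
    ∑ e : K.edgeSet, (K.lineGraph.degree e : ℤ) = ∑ x, (K.degree x : ℤ) * (K.degree x - 1) := by
  have h1 : ∀ e : K.edgeSet, (K.lineGraph.degree e : ℤ) =
      (∑ x, if x ∈ (e : Sym2 V) then ((K.degree x : ℤ) - 1) else 0) := by
    rintro ⟨⟨u, v⟩, h⟩
    have h' : K.Adj u v := h
    have h0 := deg_line K u v h'
    have : (univ.filter fun x => x ∈ (s(u,v))) = {u, v} := by ext; simp
    change _ = ∑ x, if x ∈ s(u,v) then _ else _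
    rw [← sum_filter, this, sum_pair h'.ne]
    change ((K.lineGraph.degree ⟨s(u,v), h⟩ : ℕ) : ℤ) = _
    have : ((K.lineGraph.degree ⟨s(u,v), h⟩ : ℕ) : ℤ) + 2 = K.degree u + K.degree v := by exact_mod_cast h0
    linarith
  rw [sum_congr rfl fun e _ => h1 e, sum_comm]
  refine sum_congr rfl fun x _ => ?_
  rw [← sum_filter, sum_const, nsmul_eq_mul]
  congr 2
  rw [← card_incidenceFinset_eq_degree, ← card_map (Function.Embedding.subtype _)]
  congr 1
  ext e
  simp [incidenceSet, and_comm]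

theorem two_e {V : Type*} [Fintype V] (K : SimpleGraph V) :
    2 * (Nat.card K.edgeSet : ℤ) = ∑ x, (K.degree x : ℤ) := by
  have := K.sum_degrees_eq_twice_card_edges
  rw [Nat.card_eq_fintype_card, ← edgeFinset_card]
  exact_mod_cast this.symm

theorem H_bound {V : Type*} [Fintype V] (H : SimpleGraph V) (a b c : V)
    (hc : H.Connected) (hab : H.Adj a b) (hac : H.Adj a c) (hbc : H.Adj b c)
    (hd : 3 ≤ H.degree a) :
    Nat.card V + 4 ≤ Nat.card H.lineGraph.lineGraph.edgeSet := by
  have hen : Nat.card V ≤ Nat.card H.edgeSet := by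
    have h1 := hc.card_vert_le_card_edgeSet_add_one
    rcases h1.lt_or_eq with h | h
    · omega
    · exfalso
      have := (isTree_iff_connected_and_card.2 ⟨hc, h.symm⟩).isAcyclic
      exact this (Walk.cons hab (Walk.cons hbc (Walk.cons hac.symm Walk.nil)))
        (by simp [Walk.isCycle_def, Walk.isTrail_def, hab.ne, hab.ne', hac.ne, hac.ne', hbc.ne, hbc.ne'])
  have e1 := two_e H.lineGraph.lineGraph
  rw [sum_deg_line] at e1
  have e2 := two_e H.lineGraph
  have e2' := sum_deg_line H
  have e3 := two_e H
  have hb : 2 ≤ H.degree b := by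
    rw [← card_neighborFinset_eq_degree, ← card_pair hac.ne]
    apply card_le_card; intro x; simp; rintro (rfl | rfl); exacts [hab.symm, hbc]
  have hcd : 2 ≤ H.degree c := by
    rw [← card_neighborFinset_eq_degree, ← card_pair hab.ne]
    apply card_le_card; intro x; simp; rintro (rfl | rfl); exacts [hac.symm, hbc.symm]
  have nn : ∀ x : ℕ, (0:ℤ) ≤ ((x:ℤ) - 1) * (x - 2) := by
    intro x
    rcases x with _ | _ | x
    · simp
    · simp
    · push_cast; ring_nf; positivity
  have g2 : ∀ x : ℕ, 3 ≤ x → (2:ℤ) ≤ ((x:ℤ) - 1) * (x - 2) := by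
    intro x hx
    have : (3:ℤ) ≤ x := by exact_mod_cast hx
    nlinarith
  have k1 : (2:ℤ) ≤ ∑ x, ((H.degree x : ℤ) - 1) * (H.degree x - 2) :=
    (g2 _ hd).trans (single_le_sum (f := fun x => ((H.degree x : ℤ) - 1) * (H.degree x - 2))
      (fun x _ => nn _) (mem_univ a))
  have k2 : (4:ℤ) ≤ ∑ x, ((H.lineGraph.degree x : ℤ) - 1) * (H.lineGraph.degree x - 2) := by
    have d1 := deg_line H a b hab
    have d2 := deg_line H a c hac
    have hne : (⟨s(a,b), hab⟩ : H.edgeSet) ≠ ⟨s(a,c), hac⟩ := by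
      intro h
      have := congrArg Subtype.val h
      simp at this
      rcases this with h | h
      · exact hbc.ne h
      · exact hac.ne h.1
    calc (4:ℤ) = 2 + 2 := by norm_num
      _ ≤ _ := add_le_add (g2 (H.lineGraph.degree ⟨s(a,b), hab⟩) (by omega)) (g2 (H.lineGraph.degree ⟨s(a,c), hac⟩) (by omega))
      _ = ∑ x ∈ {(⟨s(a,b), hab⟩ : H.edgeSet), ⟨s(a,c), hac⟩}, ((H.lineGraph.degree x : ℤ) - 1) * (H.lineGraph.degree x - 2) := by
        rw [sum_pair hne]
      _ ≤ _ := sum_le_sum_of_subset_of_nonneg (subset_univ _) (fun x _ _ => nn _)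
  have k1' : ∑ x, ((H.degree x : ℤ) - 1) * (H.degree x - 2) =
      ∑ x, (H.degree x : ℤ) * (H.degree x - 1) - 2 * ∑ x, (H.degree x : ℤ) + 2 * Nat.card V := by
    have : (2:ℤ) * Nat.card V = ∑ x : V, 2 := by simp [mul_comm]
    rw [this, mul_sum, ← sum_sub_distrib, ← sum_add_distrib]
    exact sum_congr rfl fun x _ => by ring
  have k2' : ∑ x, ((H.lineGraph.degree x : ℤ) - 1) * (H.lineGraph.degree x - 2) =
      ∑ x, (H.lineGraph.degree x : ℤ) * (H.lineGraph.degree x - 1) - 2 * ∑ x, (H.lineGraph.degree x : ℤ) + 2 * Nat.card H.edgeSet := by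
    have : (2:ℤ) * Nat.card H.edgeSet = ∑ x : H.edgeSet, 2 := by simp [mul_comm]
    rw [this, mul_sum, ← sum_sub_distrib, ← sum_add_distrib]
    exact sum_congr rfl fun x _ => by ring
  have e4 := sum_deg_line H.lineGraph
  zify at hen ⊢
  linarith

theorem line_conn {V : Type*} (G : SimpleGraph V) (hG : G.Connected) (e0 : G.edgeSet) :
    G.lineGraph.Connected := by
  have key : ∀ (u v : V) (p : G.Walk u v) (e f : G.edgeSet), u ∈ (e : Sym2 V) → v ∈ (f : Sym2 V) →
      G.lineGraph.Reachable e f := by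
    intro u v p
    have one : ∀ (e f : G.edgeSet) (u : V), u ∈ (e : Sym2 V) → u ∈ (f : Sym2 V) →
      G.lineGraph.Reachable e f := by
      intro e f u h1 h2
      by_cases h : e = f
      · subst h; exact Reachable.refl _
      · exact Adj.reachable (lineGraph_adj_iff_exists.2 ⟨h, u, h1, h2⟩)
    induction p with
    | nil => intro e f h1 h2; exact one e f _ h1 h2
    | @cons u w v h p ih =>
      intro e f h1 h2
      exact (one e ⟨s(u,w), h⟩ u h1 (by simp)).trans (ih _ f (by simp) h2)
  have : Nonempty G.edgeSet := ⟨e0⟩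
  refine ⟨?_⟩
  intro e f
  obtain ⟨⟨u, u'⟩, hu⟩ := e
  obtain ⟨⟨v, v'⟩, hv⟩ := f
  obtain ⟨p⟩ := hG.preconnected u v
  exact key u v p _ _ (Sym2.mem_mk_left _ _) (Sym2.mem_mk_left _ _)

theorem closed_all {V : Type*} (G : SimpleGraph V) (hG : G.Connected) (S : Set V) (x : V) (hx : x ∈ S)
    (h : ∀ u ∈ S, ∀ v, G.Adj u v → v ∈ S) : ∀ y, y ∈ S := by
  intro y
  obtain ⟨p⟩ := hG.preconnected x y
  induction p with
  | nil => exact hx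
  | cons hh p ih => exact ih (h _ hx _ hh)

theorem exists_three {V : Type*} [Fintype V] (G : SimpleGraph V) (hG : G.Connected)
    (hP : ∀ k : ℕ, IsEmpty (G ≃g pathGraph k)) (hC : ∀ k : ℕ, IsEmpty (G ≃g cycleGraph k)) :
    ∃ v x y z, G.Adj v x ∧ G.Adj v y ∧ G.Adj v z ∧ x ≠ y ∧ x ≠ z ∧ y ≠ z := by
  by_contra hno
  have hno' : ∀ v x y z, G.Adj v x → G.Adj v y → G.Adj v z → x ≠ y → z = x ∨ z = y := by
    intro v x y z h1 h2 h3 h4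
    by_contra h
    push Not at h
    exact hno ⟨v, x, y, z, h1, h2, h3, h4, h.1.symm, h.2.symm⟩
  let P : ℕ → Prop := fun k => ∃ f : ℕ → V, Set.InjOn f {i | i < k} ∧ ∀ i, i + 1 < k → G.Adj (f i) (f (i+1))
  obtain ⟨v0⟩ := hG.nonempty
  have P1 : P 1 := ⟨fun _ => v0, by intro i hi j hj _; simp at hi hj; omega, by intro i hi; omega⟩
  have hbd : ∀ k, P k → k ≤ Fintype.card V := by
    rintro k ⟨f, hf, _⟩
    have := Fintype.card_le_of_injective (fun i : Fin k => f i) (by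
      intro i j h; exact Fin.ext (hf i.2 j.2 h))
    simpa using this
  obtain ⟨k, ⟨f, hf, hadj⟩, hk1, hmax⟩ : ∃ k, P k ∧ 1 ≤ k ∧ ¬ P (k+1) := by
    refine ⟨Nat.findGreatest P (Fintype.card V), Nat.findGreatest_spec (hbd 1 P1) P1,
      Nat.le_findGreatest (hbd 1 P1) P1, fun h => ?_⟩
    have := Nat.le_findGreatest (hbd _ h) h
    omega
  have hinj : ∀ i j, i < k → j < k → f i = f j → i = j := fun i j hi hj h => hf hi hj h
  -- neighbours of ends
  have hlast : ∀ w, G.Adj (f (k-1)) w → ∃ j < k, f j = w := by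
    intro w hw
    by_contra hn
    push Not at hn
    apply hmax
    refine ⟨fun i => if i < k then f i else w, ?_, ?_⟩
    · intro i hi j hj hij
      simp only [Set.mem_ofPred_eq] at hi hj hij
      split_ifs at hij with a b b
      · exact hinj i j a b hij
      · exact absurd hij (hn i a)
      · exact absurd hij.symm (hn j b)
      · omega
    · intro i hi
      by_cases h : i + 1 < k
      · simpa [h, show i < k by omega] using hadj i h
      · have : i = k - 1 := by omega
        subst this
        simpa [show ¬ (k - 1 + 1 < k) by omega, show k - 1 < k by omega] using hw
  have hfirst : ∀ w, G.Adj (f 0) w → ∃ j < k, f j = w := by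
    intro w hw
    by_contra hn
    push Not at hn
    apply hmax
    refine ⟨fun i => if i = 0 then w else f (i-1), ?_, ?_⟩
    · intro i hi j hj hij
      simp only [Set.mem_ofPred_eq] at hi hj hij
      split_ifs at hij with a b b
      · omega
      · exact absurd hij.symm (hn (j-1) (by omega))
      · exact absurd hij (hn (i-1) (by omega))
      · have := hinj (i-1) (j-1) (by omega) (by omega) hij
        omega
    · intro i hi
      by_cases h : i = 0
      · subst h; simpa using hw.symm
      · have := hadj (i-1) (by omega)
        rw [show i - 1 + 1 = i by omega] at this
        simpa [h] using this
  have hmid : ∀ i w, 0 < i → i + 1 < k → G.Adj (f i) w → w = f (i-1) ∨ w = f (i+1) := by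
    intro i w h0 h1 hw
    have a1 := hadj (i-1) (by omega)
    rw [show i - 1 + 1 = i by omega] at a1
    refine hno' (f i) _ _ w a1.symm (hadj i h1) hw ?_
    intro h
    have := hinj (i-1) (i+1) (by omega) h1 h
    omega
  have hsurj : ∀ y, ∃ j < k, f j = y := by
    refine closed_all G hG {y | ∃ j < k, f j = y} (f 0) ⟨0, hk1, rfl⟩ ?_
    rintro u ⟨i, hi, rfl⟩ w hw
    rcases Nat.eq_zero_or_pos i with rfl | h0
    · exact hfirst w hw
    · by_cases h1 : i + 1 < k
      · rcases hmid i w h0 h1 hw with rfl | rfl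
        · exact ⟨i-1, by omega, rfl⟩
        · exact ⟨i+1, by omega, rfl⟩
      · have : i = k - 1 := by omega
        subst this; exact hlast w hw
  let E : Fin k ≃ V := Equiv.ofBijective (fun i : Fin k => f i)
    ⟨fun i j h => Fin.ext (hinj _ _ i.2 j.2 h), fun y => by
      obtain ⟨j, hj, h⟩ := hsurj y; exact ⟨⟨j, hj⟩, h⟩⟩
  have hE : ∀ i, E i = f i := fun i => rfl
  have hlt : ∀ i j, i < j → j < k → G.Adj (f i) (f j) → j = i + 1 ∨ (i = 0 ∧ j = k - 1) := by
    intro i j hij hj h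
    by_cases h0 : 0 < i
    · left
      rcases hmid i _ h0 (by omega) h with h | h
      · have := hinj j (i-1) hj (by omega) h; omega
      · exact hinj j (i+1) hj (by omega) h
    · by_cases h1 : j + 1 < k
      · rcases hmid j _ (by omega) h1 h.symm with h | h
        · have := hinj i (j-1) (by omega) (by omega) h; omega
        · have := hinj i (j+1) (by omega) (by omega) h; omega
      · right; omega
  by_cases hcyc : 3 ≤ k ∧ G.Adj (f 0) (f (k-1))
  · refine (hC k).false (Iso.symm ⟨E, ?_⟩)
    intro i j
    rw [hE, hE, cycleGraph_adj']
    have hi := i.2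
    have hj := j.2
    have m1 : ∀ a b : Fin k, (a - b).val = 1 ↔ (a.val = b.val + 1 ∨ (a.val = 0 ∧ b.val = k - 1)) := by
      intro a b
      have ha := a.2
      have hb := b.2
      rw [Fin.sub_def]
      simp only
      rcases le_or_gt b.val a.val with h | h
      · rw [show k - b.val + a.val = (a.val - b.val) + k by omega, Nat.add_mod_right, Nat.mod_eq_of_lt (by omega)]
        omega
      · rw [Nat.mod_eq_of_lt (by omega)]
        omega
    rw [m1, m1]
    constructor
    · intro h
      rcases lt_trichotomy i.val j.val with h1 | h1 | h1
      · have := hlt _ _ h1 hj h; omega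
      · rw [h1] at h; exact absurd h (G.irrefl)
      · have := hlt _ _ h1 hi h.symm; omega
    · rintro ((h | ⟨h, h'⟩) | (h | ⟨h, h'⟩))
      · rw [h]; exact (hadj _ (by omega)).symm
      · rw [h, h']; exact hcyc.2
      · rw [h]; exact (hadj _ (by omega))
      · rw [h, h']; exact hcyc.2.symm
  · refine (hP k).false (Iso.symm ⟨E, ?_⟩)
    intro i j
    rw [hE, hE, pathGraph_adj]
    have hi := i.2
    have hj := j.2
    have hlt' : ∀ i j, i < j → j < k → G.Adj (f i) (f j) → i + 1 = j := by
      intro i j hij hj h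
      rcases hlt i j hij hj h with h' | ⟨h', h''⟩
      · exact h'.symm
      · subst h' h''
        by_contra hh
        exact hcyc ⟨by omega, h⟩
    constructor
    · intro h
      rcases lt_trichotomy i.val j.val with h1 | h1 | h1
      · exact Or.inl (hlt' _ _ h1 hj h)
      · rw [h1] at h; exact absurd h (G.irrefl)
      · exact Or.inr (hlt' _ _ h1 hi h.symm)
    · rintro (h | h)
      · rw [← h]; exact hadj _ (by omega)
      · rw [← h]; exact (hadj _ (by omega)).symm

theorem star_case {V : Type*} [Fintype V] (G : SimpleGraph V) (hG : G.Connected) (v x y z : V)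
    (hx : G.Adj v x) (hy : G.Adj v y) (hz : G.Adj v z) (hxy : x ≠ y) (hxz : x ≠ z) (hyz : y ≠ z)
    (hv : ∀ w, G.Adj v w → w = x ∨ w = y ∨ w = z) (ax : ∀ w, G.Adj x w → w = v)
    (ay : ∀ w, G.Adj y w → w = v) (az : ∀ w, G.Adj z w → w = v) :
    Nonempty (G ≃g completeBipartiteGraph (Fin 1) (Fin 3)) := by
  have hall : ∀ w, w ∈ ({v, x, y, z} : Set V) := by
    refine closed_all G hG _ v (by simp) ?_
    intro u hu w hw
    simp only [Set.mem_insert_iff, Set.mem_singleton_iff] at hu ⊢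
    rcases hu with rfl | rfl | rfl | rfl
    · exact Or.inr (hv w hw)
    · exact Or.inl (ax w hw)
    · exact Or.inl (ay w hw)
    · exact Or.inl (az w hw)
  let g : Fin 1 ⊕ Fin 3 → V := Sum.elim (fun _ => v) ![x, y, z]
  have hg : Function.Bijective g := by
    constructor
    · rintro (i | i) (j | j) h <;> fin_cases i <;> fin_cases j <;>
        simp_all [g, hx.ne, hy.ne, hz.ne, hx.ne', hy.ne', hz.ne', hxy.symm, hxz.symm, hyz.symm]
    · intro w
      have := hall w
      simp only [Set.mem_insert_iff, Set.mem_singleton_iff] at this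
      rcases this with rfl | rfl | rfl | rfl
      · exact ⟨Sum.inl 0, rfl⟩
      · exact ⟨Sum.inr 0, rfl⟩
      · exact ⟨Sum.inr 1, rfl⟩
      · exact ⟨Sum.inr 2, rfl⟩
  refine ⟨Iso.symm ⟨Equiv.ofBijective g hg, ?_⟩⟩
  have nxy : ¬ G.Adj x y := fun h => hy.ne (ax _ h).symm
  have nxz : ¬ G.Adj x z := fun h => hz.ne (ax _ h).symm
  have nyz : ¬ G.Adj y z := fun h => hz.ne (ay _ h).symm
  rintro (i | i) (j | j) <;> fin_cases i <;> fin_cases j <;>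
    simp [g, hx, hy, hz, hx.symm, hy.symm, hz.symm, nxy, nxz, nyz, G.adj_comm y x, G.adj_comm z x, G.adj_comm z y]

theorem three_main {V : Type*} [Fintype V] (G : SimpleGraph V) (hG : G.Connected)
    (hP : ∀ k : ℕ, IsEmpty (G ≃g pathGraph k)) (hC : ∀ k : ℕ, IsEmpty (G ≃g cycleGraph k))
    (hS : IsEmpty (G ≃g completeBipartiteGraph (Fin 1) (Fin 3))) :
    Nat.card G.edgeSet + 4 ≤ Nat.card G.lineGraph.lineGraph.lineGraph.edgeSet := by
  obtain ⟨v, x, y, z, hx, hy, hz, hxy, hxz, hyz⟩ := exists_three G hG hP hC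
  have hcon := line_conn G hG ⟨s(v,x), hx⟩
  have ladj : ∀ a b (ha : G.Adj v a) (hb : G.Adj v b), a ≠ b →
      G.lineGraph.Adj ⟨s(v,a), ha⟩ ⟨s(v,b), hb⟩ := by
    intro a b ha hb hab
    refine lineGraph_adj_iff_exists.2 ⟨fun h => hab ?_, v, by simp, by simp⟩
    have := congrArg Subtype.val h
    simp at this
    rcases this with h | h
    · exact h
    · exact absurd h.1 hb.ne
  have three_le : ∀ (u a b c : V), G.Adj u a → G.Adj u b → G.Adj u c → a ≠ b → a ≠ c → b ≠ c →
      3 ≤ G.degree u := by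
    intro u a b c h1 h2 h3 h4 h5 h6
    rw [← card_neighborFinset_eq_degree, ← card_eq_three.2 ⟨a, b, c, h4, h5, h6, rfl⟩]
    apply card_le_card; intro t; simp; rintro (rfl | rfl | rfl) <;> assumption
  have hv3 := three_le v x y z hx hy hz hxy hxz hyz
  -- any outside edge gives the bound
  have main : ∀ a b c (ha : G.Adj v a) (hb : G.Adj v b) (hc : G.Adj v c), a ≠ b → a ≠ c → b ≠ c →
      (4 ≤ G.degree v ∨ 2 ≤ G.degree a) →
      Nat.card G.edgeSet + 4 ≤ Nat.card G.lineGraph.lineGraph.lineGraph.edgeSet := by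
    intro a b c ha hb hc hab hac hbc h
    refine H_bound G.lineGraph ⟨s(v,a), ha⟩ ⟨s(v,b), hb⟩ ⟨s(v,c), hc⟩ hcon
      (ladj _ _ _ _ hab) (ladj _ _ _ _ hac) (ladj _ _ _ _ hbc) ?_
    have := deg_line G v a ha
    have h1 : 1 ≤ G.degree a := by
      rw [← card_neighborFinset_eq_degree, Nat.one_le_iff_ne_zero, ← pos_iff_ne_zero, card_pos]
      exact ⟨v, by simpa using ha.symm⟩
    omega
  by_contra hn
  have leaf : ∀ a, G.Adj v a → G.degree a < 2 → ∀ w, G.Adj a w → w = v := by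
    intro a ha hd w hw
    by_contra hne
    have : 2 ≤ G.degree a := by
      rw [← card_neighborFinset_eq_degree, ← card_pair hne]
      apply card_le_card; intro t; simp; rintro (rfl | rfl); exacts [hw, ha.symm]
    omega
  refine not_nonempty_iff.2 hS (star_case G hG v x y z hx hy hz hxy hxz hyz ?_ ?_ ?_ ?_)
  · intro w hw
    by_contra hne
    push Not at hne
    refine hn (main x y z hx hy hz hxy hxz hyz (Or.inl ?_))
    have : #({w, x, y, z} : Finset V) = 4 := by
      rw [card_insert_of_notMem (by simp [hne]), card_eq_three.2 ⟨x, y, z, hxy, hxz, hyz, rfl⟩]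
    rw [← card_neighborFinset_eq_degree, ← this]
    apply card_le_card; intro t; simp; rintro (rfl | rfl | rfl | rfl) <;> assumption
  · exact leaf x hx (by by_contra h; exact hn (main x y z hx hy hz hxy hxz hyz (Or.inr (by omega))))
  · exact leaf y hy (by by_contra h; exact hn (main y x z hy hx hz hxy.symm hyz hxz (Or.inr (by omega))))
  · exact leaf z hz (by by_contra h; exact hn (main z x y hz hx hy hxz.symm hyz.symm hxy (Or.inr (by omega))))

end aux

/-- For a prolific graph, `e(L³(G)) ≥ e(G) + 4`. -/
theorem edges_iter_three (X : FGraph) [Finite X.V] (hp : X.Prolific) :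
    (X.iter 3).e ≥ X.e + 4 := by
  have := Fintype.ofFinite X.V
  obtain ⟨h1, h2, h3, h4⟩ := hp
  exact three_main X.G h1 h2 h3 h4
end

section
/- Let G be a prolific graph. Then there exists r with 1 ≤ r ≤ 4 such that n(L^r(G)) > n(G). -/
open SimpleGraph

/-- Every vertex has at most two neighbours. -/
def D2 {V : Type} (G : SimpleGraph V) : Prop :=
  ∀ v a b c, G.Adj v a → G.Adj v b → G.Adj v c → a = b ∨ b = c ∨ a = c

lemma closed_univ {V : Type} {G : SimpleGraph V} (hc : G.Connected) (S : Set V) (v : V)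
    (hv : v ∈ S) (h : ∀ x y, x ∈ S → G.Adj x y → y ∈ S) (w : V) : w ∈ S := by
  obtain ⟨p⟩ := hc.preconnected v w
  induction p with
  | nil => exact hv
  | cons hadj _ ih => exact ih (h _ _ hv hadj)

/-- There is a path with `k` edges. -/
def HasP {V : Type} (G : SimpleGraph V) (k : ℕ) (f : ℕ → V) : Prop :=
  (∀ i j, i ≤ k → j ≤ k → f i = f j → i = j) ∧ ∀ i, i < k → G.Adj (f i) (f (i + 1))

lemma path_or_cycle {V : Type} [Finite V] {G : SimpleGraph V} (hc : G.Connected) (hd : D2 G) :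
    ∃ k, Nonempty (G ≃g pathGraph k) ∨ Nonempty (G ≃g cycleGraph k) := by
  classical
  have hbound : ∀ k, (∃ f, HasP G k f) → k ≤ Nat.card V := by
    rintro k ⟨f, hf, -⟩
    have : Function.Injective (fun i : Fin (k + 1) => f i) := by
      intro i j hij
      exact Fin.ext (hf i j (by omega) (by omega) hij)
    have := Nat.card_le_card_of_injective _ this
    simp at this
    omega
  obtain ⟨v0⟩ := hc.nonempty
  have h0 : ∃ f, HasP G 0 f := ⟨fun _ => v0, by intro i j hi hj _; omega, by intro i hi; omega⟩
  have hP := Nat.findGreatest_spec (P := fun k => ∃ f, HasP G k f) (Nat.zero_le (Nat.card V)) h0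
  have hM : ∀ k, (∃ f, HasP G k f) → k ≤ Nat.findGreatest (fun k => ∃ f, HasP G k f) (Nat.card V) :=
    fun k hk => Nat.le_findGreatest (hbound k hk) hk
  generalize Nat.findGreatest (fun k => ∃ f, HasP G k f) (Nat.card V) = k at hP hM
  obtain ⟨f, hinj, hadj⟩ := hP
  have hclosed : ∀ i w, i ≤ k → G.Adj (f i) w → ∃ j, j ≤ k ∧ f j = w := by
    intro i w hi hw
    by_contra hno
    push Not at hno
    by_cases hik : i = k
    · subst hik
      have := hM (i + 1) ⟨fun j => if j = i + 1 then w else f j, ?_, ?_⟩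
      · omega
      · intro a b ha hb hab
        dsimp only at hab
        split_ifs at hab with h1 h2 h2
        · omega
        · exact absurd hab.symm (hno b (by omega))
        · exact absurd hab (hno a (by omega))
        · exact hinj a b (by omega) (by omega) hab
      · intro a ha
        dsimp only
        rw [if_neg (by omega)]
        split_ifs with h2
        · have : a = i := by omega
          subst this; exact hw
        · exact hadj a (by omega)
    by_cases hi0 : i = 0
    · subst hi0
      have := hM (k + 1) ⟨fun j => if j = 0 then w else f (j - 1), ?_, ?_⟩
      · omega
      · intro a b ha hb hab
        dsimp only at hab
        split_ifs at hab with h1 h2 h2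
        · omega
        · exact absurd hab.symm (hno (b - 1) (by omega))
        · exact absurd hab (hno (a - 1) (by omega))
        · have := hinj (a - 1) (b - 1) (by omega) (by omega) hab
          omega
      · intro a ha
        dsimp only
        rw [if_neg (show a + 1 ≠ 0 by omega)]
        split_ifs with h2
        · subst h2; exact hw.symm
        · have := hadj (a - 1) (by omega)
          rw [show a - 1 + 1 = a by omega] at this
          simpa using this
    have h1 := hadj (i - 1) (by omega)
    rw [show i - 1 + 1 = i by omega] at h1
    rcases hd (f i) (f (i - 1)) (f (i + 1)) w h1.symm (hadj i (by omega)) hw with h | h | h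
    · have := hinj _ _ (by omega) (by omega) h
      omega
    · exact hno (i + 1) (by omega) h
    · exact hno (i - 1) (by omega) h
  have hsurj : ∀ w, ∃ j, j ≤ k ∧ f j = w := by
    refine closed_univ hc {w | ∃ j, j ≤ k ∧ f j = w} (f 0) ⟨0, by omega, rfl⟩ ?_
    rintro x y ⟨j, hj, rfl⟩ hy
    exact hclosed j y hj hy
  have key : ∀ i j, i < j → j ≤ k → G.Adj (f i) (f j) → j = i + 1 ∨ (i = 0 ∧ j = k) := by
    intro i j hij hj h
    by_contra hno
    push Not at hno
    by_cases hi0 : i = 0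
    · have hjk : j < k := lt_of_le_of_ne hj (hno.2 hi0)
      have h1 := hadj (j - 1) (by omega)
      rw [show j - 1 + 1 = j by omega] at h1
      rcases hd (f j) (f (j - 1)) (f (j + 1)) (f i) h1.symm (hadj j (by omega)) h.symm with h | h | h
      all_goals
        have := hinj _ _ (by omega) (by omega) h
        omega
    · have h1 := hadj (i - 1) (by omega)
      rw [show i - 1 + 1 = i by omega] at h1
      rcases hd (f i) (f (i - 1)) (f (i + 1)) (f j) h1.symm (hadj i (by omega)) h with h | h | h
      all_goals
        have := hinj _ _ (by omega) (by omega) h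
        omega
  have hbij : Function.Bijective (fun i : Fin (k + 1) => f i) := by
    constructor
    · intro i j hij
      exact Fin.ext (hinj i j (by omega) (by omega) hij)
    · intro w
      obtain ⟨j, hj, rfl⟩ := hsurj w
      exact ⟨⟨j, by omega⟩, rfl⟩
  let E := Equiv.ofBijective _ hbij
  have hE : ∀ i, E i = f i := fun i => rfl
  have wlogadj : ∀ H : SimpleGraph (Fin (k + 1)),
      (∀ i j : Fin (k + 1), i.val < j.val → (G.Adj (f i) (f j) ↔ H.Adj i j)) →
      Nonempty (G ≃g H) := by
    intro H hH
    refine ⟨(RelIso.mk E ?_ : H ≃g G).symm⟩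
    intro i j
    rw [hE, hE]
    rcases lt_trichotomy i.val j.val with h | h | h
    · exact hH i j h
    · have := Fin.ext h
      subst this
      simp
    · rw [G.adj_comm, H.adj_comm]
      exact hH j i h
  refine ⟨k + 1, ?_⟩
  by_cases hcyc : 2 ≤ k ∧ G.Adj (f 0) (f k)
  · right
    apply wlogadj
    intro i j hij
    rw [cycleGraph_adj']
    have e1 : (j - i).val = j.val - i.val := Fin.coe_sub_iff_le.mpr hij.le
    have e2 : (i - j).val = k + 1 + i.val - j.val := Fin.coe_sub_iff_lt.mpr hij
    rw [e1, e2]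
    have := j.2
    constructor
    · intro h
      have := key i j hij (by omega) h
      omega
    · intro h
      by_cases h1 : j.val = i.val + 1
      · rw [h1]; exact hadj i (by omega)
      · have h2 : i.val = 0 := by omega
        have h3 : j.val = k := by omega
        rw [h2, h3]; exact hcyc.2
  · left
    apply wlogadj
    intro i j hij
    rw [pathGraph_adj]
    have := j.2
    constructor
    · intro h
      rcases key i j hij (by omega) h with h1 | ⟨h1, h2⟩
      · omega
      · by_cases hk : 2 ≤ k
        · rw [h1, h2] at h
          exact absurd ⟨hk, h⟩ hcyc
        · omega
    · intro h
      have h1 : j.val = i.val + 1 := by omega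
      rw [h1]; exact hadj i (by omega)

lemma star {V : Type} {G : SimpleGraph V} (hc : G.Connected) (hG : ¬ D2 G)
    (hL : D2 G.lineGraph) : Nonempty (G ≃g completeBipartiteGraph (Fin 1) (Fin 3)) := by
  classical
  unfold D2 at hG
  push Not at hG
  obtain ⟨v, a, b, c, ha, hb, hcc, hab, hbc, hac⟩ := hG
  have leaf : ∀ a b c x, G.Adj v a → G.Adj v b → G.Adj v c → a ≠ b → b ≠ c → a ≠ c →
      G.Adj a x → x = v := by
    intro a b c x ha hb hcc hab hbc hac hx
    by_contra hxv
    have := ha.ne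
    have := hb.ne
    have := hcc.ne
    have := hx.ne
    have := hL ⟨s(v, a), ha⟩ ⟨s(v, b), hb⟩ ⟨s(v, c), hcc⟩ ⟨s(a, x), hx⟩
      (lineGraph_adj_iff_exists.2 ⟨by simp; grind, v, by simp, by simp⟩)
      (lineGraph_adj_iff_exists.2 ⟨by simp; grind, v, by simp, by simp⟩)
      (lineGraph_adj_iff_exists.2 ⟨by simp; grind, a, by simp, by simp⟩)
    simp only [Subtype.ext_iff, Sym2.eq_iff] at this
    grind
  have four : ∀ x, G.Adj v x → x = a ∨ x = b ∨ x = c := by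
    intro x hx
    by_contra hno
    have := ha.ne
    have := hb.ne
    have := hcc.ne
    have := hx.ne
    have := hL ⟨s(v, a), ha⟩ ⟨s(v, b), hb⟩ ⟨s(v, c), hcc⟩ ⟨s(v, x), hx⟩
      (lineGraph_adj_iff_exists.2 ⟨by simp; grind, v, by simp, by simp⟩)
      (lineGraph_adj_iff_exists.2 ⟨by simp; grind, v, by simp, by simp⟩)
      (lineGraph_adj_iff_exists.2 ⟨by simp; grind, v, by simp, by simp⟩)
    simp only [Subtype.ext_iff, Sym2.eq_iff] at this
    grind
  have la := fun x => leaf a b c x ha hb hcc hab hbc hac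
  have lb := fun x => leaf b a c x hb ha hcc hab.symm hac hbc
  have lc := fun x => leaf c a b x hcc ha hb hac.symm hab hbc.symm
  have hall : ∀ w, w = v ∨ w = a ∨ w = b ∨ w = c := by
    refine closed_univ hc {w | w = v ∨ w = a ∨ w = b ∨ w = c} v (Or.inl rfl) ?_
    rintro x y (rfl | rfl | rfl | rfl) hy
    · exact Or.inr (four y hy)
    · exact Or.inl (la y hy)
    · exact Or.inl (lb y hy)
    · exact Or.inl (lc y hy)
  have := ha.ne
  have := hb.ne
  have := hcc.ne
  let g : Fin 1 ⊕ Fin 3 → V := Sum.elim (fun _ => v) ![a, b, c]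
  have hg : Function.Bijective g := by
    constructor
    · rintro (i | i) (j | j) h <;> fin_cases i <;> fin_cases j <;> simp [g] at h ⊢ <;> grind
    · intro w
      rcases hall w with rfl | rfl | rfl | rfl
      · exact ⟨Sum.inl 0, rfl⟩
      · exact ⟨Sum.inr 0, rfl⟩
      · exact ⟨Sum.inr 1, rfl⟩
      · exact ⟨Sum.inr 2, rfl⟩
  refine ⟨(RelIso.mk (Equiv.ofBijective g hg) ?_ : completeBipartiteGraph (Fin 1) (Fin 3) ≃g G).symm⟩
  rintro (i | i) (j | j) <;> fin_cases i <;> fin_cases j <;>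
    simp [g, completeBipartiteGraph, ha, hb, hcc, ha.symm, hb.symm, hcc.symm] <;> grind

lemma count {V : Type} [Finite V] (G : SimpleGraph V) :
    2 * Nat.card G.edgeSet ≤ Nat.card G.lineGraph.edgeSet + Nat.card V ∧
    (¬ D2 G → 2 * Nat.card G.edgeSet + 1 ≤ Nat.card G.lineGraph.edgeSet + Nat.card V) := by
  classical
  have := Fintype.ofFinite V
  have hs := G.sum_degrees_eq_twice_card_edges
  have hdart := G.lineGraph.dart_card_eq_twice_card_edges
  rw [Nat.card_eq_fintype_card, Nat.card_eq_fintype_card, Nat.card_eq_fintype_card,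
    ← edgeFinset_card, ← edgeFinset_card]
  have hle : ∑ v, (G.degree v * G.degree v - G.degree v) ≤ Fintype.card G.lineGraph.Dart := by
    have : ∑ v, (G.degree v * G.degree v - G.degree v) =
        Fintype.card (Σ v, {x // x ∈ (G.neighborFinset v).offDiag}) := by
      rw [Fintype.card_sigma]
      refine Finset.sum_congr rfl fun v _ => ?_
      rw [Fintype.card_coe, Finset.offDiag_card, card_neighborFinset_eq_degree]
    rw [this]
    have hm : ∀ p : (Σ v, {x // x ∈ (G.neighborFinset v).offDiag}),
        G.Adj p.1 p.2.1.1 ∧ G.Adj p.1 p.2.1.2 ∧ p.2.1.1 ≠ p.2.1.2 := by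
      rintro ⟨v, ⟨a, b⟩, h⟩
      simpa using h
    refine Fintype.card_le_of_injective
      (fun p => (⟨(⟨s(p.1, p.2.1.1), (hm p).1⟩, ⟨s(p.1, p.2.1.2), (hm p).2.1⟩),
        lineGraph_adj_iff_exists.2 ⟨?_, p.1, by simp, by simp⟩⟩ : G.lineGraph.Dart)) ?_
    · have := (hm p).2.2
      simp only [ne_eq, Subtype.mk.injEq, Sym2.eq_iff]
      grind
    · intro p q hpq
      have hp := hm p
      have hq := hm q
      obtain ⟨v, ⟨a, b⟩, h⟩ := p
      obtain ⟨v', ⟨a', b'⟩, h'⟩ := q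
      simp only [Dart.mk.injEq, Prod.mk.injEq, Subtype.mk.injEq, Sym2.eq_iff] at hpq hp hq
      have h1 := hp.1.ne
      have h2 := hp.2.1.ne
      have : v = v' ∧ a = a' ∧ b = b' := by grind
      obtain ⟨rfl, rfl, rfl⟩ := this
      rfl
  have hpt : ∀ d : ℕ, 2 * d ≤ d * d - d + 2 := by
    intro d
    have : d ≤ d * d := Nat.le_mul_self d
    zify [this]
    rcases le_or_gt d 1 with h | h
    · interval_cases d <;> simp
    · have : (2:ℤ) ≤ d := by exact_mod_cast h
      nlinarith
  have hsum : ∑ v, (G.degree v * G.degree v - G.degree v + 2) =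
      ∑ v, (G.degree v * G.degree v - G.degree v) + 2 * Fintype.card V := by
    rw [Finset.sum_add_distrib]; simp [mul_comm]
  have hsum2 : ∑ v, 2 * G.degree v = 4 * G.edgeFinset.card := by
    rw [← Finset.mul_sum, hs]; ring
  constructor
  · have : ∑ v, 2 * G.degree v ≤ ∑ v, (G.degree v * G.degree v - G.degree v + 2) :=
      Finset.sum_le_sum fun v _ => hpt _
    omega
  · intro hG
    unfold D2 at hG
    push Not at hG
    obtain ⟨v, a, b, c, ha, hb, hcc, hab, hbc, hac⟩ := hG
    have hdeg : 3 ≤ G.degree v := by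
      rw [← card_neighborFinset_eq_degree]
      have : ({a, b, c} : Finset V) ⊆ G.neighborFinset v := by
        intro x hx
        simp at hx ⊢
        rcases hx with rfl | rfl | rfl <;> assumption
      have := Finset.card_le_card this
      rwa [Finset.card_eq_three.2 ⟨a, b, c, hab, hac, hbc, rfl⟩] at this
    have : ∑ v, 2 * G.degree v < ∑ v, (G.degree v * G.degree v - G.degree v + 2) := by
      refine Finset.sum_lt_sum (fun v _ => hpt _) ⟨v, Finset.mem_univ _, ?_⟩
      generalize G.degree v = d at hdeg
      have : d ≤ d * d := Nat.le_mul_self d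
      zify [this] at hdeg ⊢
      nlinarith
    omega

/-- For a prolific graph there is `r` with `1 ≤ r ≤ 4` and `n(L^r(G)) > n(G)`. -/
theorem numVertices_index_le_four (X : FGraph) [Finite X.V] (hp : X.Prolific) :
    ∃ r : ℕ, 1 ≤ r ∧ r ≤ 4 ∧ X.n < (X.iter r).n := by
  obtain ⟨hc, hpath, hcyc, hstar⟩ := hp
  have h0 : ¬ D2 X.G := by
    intro h
    obtain ⟨k, (e | e)⟩ := path_or_cycle hc h
    · exact e.elim (hpath k).false
    · exact e.elim (hcyc k).false
  have h1 : ¬ D2 X.G.lineGraph := by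
    intro h
    obtain ⟨e⟩ := star hc h0 h
    exact hstar.false e
  have a0 : X.n ≤ (X.iter 1).n + 1 := hc.card_vert_le_card_edgeSet_add_one
  have a1 : 2 * (X.iter 1).n + 1 ≤ (X.iter 2).n + X.n := (count X.G).2 h0
  have a2 : 2 * (X.iter 2).n + 1 ≤ (X.iter 3).n + (X.iter 1).n := (count X.G.lineGraph).2 h1
  have a3 : 2 * (X.iter 3).n ≤ (X.iter 4).n + (X.iter 2).n :=
    (count X.G.lineGraph.lineGraph).1
  by_contra hno
  push Not at hno
  have b1 := hno 1 (by omega) (by omega)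
  have b2 := hno 2 (by omega) (by omega)
  have b3 := hno 3 (by omega) (by omega)
  have b4 := hno 4 (by omega) (by omega)
  omega
end

section
/- Let G be a prolific graph. Then there exists r with 1 ≤ r ≤ 3 such that Δ(L^r(G)) > Δ(G), where Δ denotes the maximum degree. -/
open SimpleGraph

lemma aux_closed {V : Type} {G : SimpleGraph V} (hc : G.Connected) (S : Set V) {v : V} (hv : v ∈ S)
    (h : ∀ x ∈ S, ∀ y, G.Adj x y → y ∈ S) (y : V) : y ∈ S := by
  obtain ⟨p⟩ := hc.preconnected v y
  induction p with
  | nil => exact hv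
  | cons hadj p ih => exact ih (h _ hv _ hadj)

lemma aux_line_deg {V : Type} [Finite V] {G : SimpleGraph V} {u v : V} (h : G.Adj u v) :
    (G.neighborSet u).ncard + (G.neighborSet v).ncard ≤
      (G.lineGraph.neighborSet ⟨s(u,v), h⟩).ncard + 2 := by
  have h1 : ((G.neighborSet u) \ {v}).ncard + 1 = (G.neighborSet u).ncard :=
    Set.ncard_sdiff_singleton_add_one h (Set.toFinite _)
  have h2 : ((G.neighborSet v) \ {u}).ncard + 1 = (G.neighborSet v).ncard :=
    Set.ncard_sdiff_singleton_add_one h.symm (Set.toFinite _)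
  have hne := h.ne
  have i1 : ((fun w => s(u,w)) '' ((G.neighborSet u) \ {v})).ncard
      = ((G.neighborSet u) \ {v}).ncard :=
    Set.ncard_image_of_injective _ (fun a b hab => Sym2.congr_right.1 hab)
  have i2 : ((fun w => s(v,w)) '' ((G.neighborSet v) \ {u})).ncard
      = ((G.neighborSet v) \ {u}).ncard :=
    Set.ncard_image_of_injective _ (fun a b hab => Sym2.congr_right.1 hab)
  have hd : Disjoint ((fun w => s(u,w)) '' ((G.neighborSet u) \ {v}))
      ((fun w => s(v,w)) '' ((G.neighborSet v) \ {u})) := by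
    rw [Set.disjoint_left]
    rintro _ ⟨a, ⟨ha, ha'⟩, rfl⟩ ⟨b, ⟨hb, hb'⟩, hab⟩
    simp only [Sym2.eq_iff, Set.mem_singleton_iff] at *
    grind
  have hu := Set.ncard_union_eq hd (Set.toFinite _) (Set.toFinite _)
  have hi : (Subtype.val '' (G.lineGraph.neighborSet ⟨s(u,v), h⟩)).ncard
      = (G.lineGraph.neighborSet ⟨s(u,v), h⟩).ncard :=
    Set.ncard_image_of_injective _ Subtype.val_injective
  have hs : ((fun w => s(u,w)) '' ((G.neighborSet u) \ {v})) ∪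
      ((fun w => s(v,w)) '' ((G.neighborSet v) \ {u})) ⊆
      Subtype.val '' (G.lineGraph.neighborSet ⟨s(u,v), h⟩) := by
    rintro _ (⟨a, ⟨ha, ha'⟩, rfl⟩ | ⟨a, ⟨ha, ha'⟩, rfl⟩)
    · refine ⟨⟨s(u,a), ha⟩, ?_, rfl⟩
      rw [mem_neighborSet, lineGraph_adj_iff_exists]
      refine ⟨?_, u, by simp, by simp⟩
      intro hh
      replace hh := Sym2.eq_iff.1 (congrArg Subtype.val hh)
      simp only [Set.mem_singleton_iff] at *
      grind
    · refine ⟨⟨s(v,a), ha⟩, ?_, rfl⟩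
      rw [mem_neighborSet, lineGraph_adj_iff_exists]
      refine ⟨?_, v, by simp, by simp⟩
      intro hh
      replace hh := Sym2.eq_iff.1 (congrArg Subtype.val hh)
      simp only [Set.mem_singleton_iff] at *
      grind
  have := Set.ncard_le_ncard hs (Set.toFinite _)
  omega

lemma aux_line_adj {V : Type} {G : SimpleGraph V} {v u w : V} (h : G.Adj v u) (h' : G.Adj v w)
    (hne : u ≠ w) : G.lineGraph.Adj ⟨s(v,u), h⟩ ⟨s(v,w), h'⟩ := by
  rw [lineGraph_adj_iff_exists]
  refine ⟨?_, v, by simp, by simp⟩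
  intro hh
  replace hh := Sym2.eq_iff.1 (congrArg Subtype.val hh)
  grind

lemma aux_three {V : Type} [Finite V] {G : SimpleGraph V} {v a b c : V} (ha : G.Adj v a)
    (hb : G.Adj v b) (hc : G.Adj v c) (hab : a ≠ b) (hac : a ≠ c) (hbc : b ≠ c) :
    ∃ e, 4 * (G.neighborSet v).ncard + 2 * (G.neighborSet a).ncard + (G.neighborSet b).ncard
      + (G.neighborSet c).ncard ≤
      (G.lineGraph.lineGraph.lineGraph.neighborSet e).ncard + 14 := by
  have k1 := aux_line_deg ha
  have k2 := aux_line_deg hb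
  have k3 := aux_line_deg hc
  have a1 := aux_line_adj ha hb hab
  have a2 := aux_line_adj ha hc hac
  have l1 := aux_line_deg a1
  have l2 := aux_line_deg a2
  have hne : (⟨s(v,b), hb⟩ : G.edgeSet) ≠ ⟨s(v,c), hc⟩ := by
    intro hh
    exact hbc (Sym2.congr_right.1 (congrArg Subtype.val hh))
  have a3 := aux_line_adj a1 a2 hne
  have m := aux_line_deg a3
  refine ⟨_, le_trans ?_ (Nat.add_le_add_right m 12)⟩
  omega

lemma aux_star {V : Type} [Finite V] {G : SimpleGraph V} (hG : G.Connected) {v : V}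
    (hv : (G.neighborSet v).ncard = 3)
    (h : ∀ w, G.Adj v w → (G.neighborSet w).ncard ≤ 1) :
    Nonempty (G ≃g completeBipartiteGraph (Fin 1) (Fin 3)) := by
  obtain ⟨a, b, c, hab, hac, hbc, hN⟩ := Set.ncard_eq_three.1 hv
  have hN' : ∀ w, G.Adj v w ↔ w = a ∨ w = b ∨ w = c := by
    intro w
    rw [← mem_neighborSet, hN]; simp
  have hleaf : ∀ w, G.Adj v w → ∀ x, G.Adj w x → x = v := by
    intro w hw x hx
    exact (Set.ncard_le_one (Set.toFinite _)).1 (h w hw) x hx v hw.symm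
  have hall : ∀ y, y = v ∨ G.Adj v y := by
    intro y
    refine aux_closed hG {y | y = v ∨ G.Adj v y} (v := v) (Or.inl rfl) ?_ y
    rintro x (rfl | hx) y hxy
    · exact Or.inr hxy
    · exact Or.inl (hleaf x hx y hxy)
  have va : G.Adj v a := (hN' a).2 (by simp)
  have vb : G.Adj v b := (hN' b).2 (by simp)
  have vc : G.Adj v c := (hN' c).2 (by simp)
  let f : Fin 1 ⊕ Fin 3 → V := Sum.elim (fun _ => v) ![a, b, c]
  have hr : ∀ i : Fin 3, G.Adj v (f (Sum.inr i)) := by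
    intro i; fin_cases i <;> simp [f, va, vb, vc]
  have hl : ∀ i : Fin 1, f (Sum.inl i) = v := fun _ => rfl
  have hinj : Function.Injective f := by
    rintro (i | i) (j | j) hij
    · congr 1; exact Subsingleton.elim _ _
    · exact absurd hij (by rw [hl]; exact (hr j).ne)
    · exact absurd hij (by rw [hl]; exact (hr i).ne')
    · congr 1
      fin_cases i <;> fin_cases j <;> simp [f] at hij ⊢ <;> grind
  have hsurj : Function.Surjective f := by
    intro y
    rcases hall y with rfl | hy
    · exact ⟨Sum.inl 0, rfl⟩
    · rcases (hN' y).1 hy with rfl | rfl | rfl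
      · exact ⟨Sum.inr 0, rfl⟩
      · exact ⟨Sum.inr 1, rfl⟩
      · exact ⟨Sum.inr 2, rfl⟩
  refine ⟨RelIso.symm ⟨Equiv.ofBijective f ⟨hinj, hsurj⟩, ?_⟩⟩
  rintro (i | i) (j | j)
  · change G.Adj v v ↔ _
    simp
  · change G.Adj v (f (Sum.inr j)) ↔ _
    simp [hr]
  · change G.Adj (f (Sum.inr i)) v ↔ _
    simp [(hr i).symm]
  · change G.Adj (f (Sum.inr i)) (f (Sum.inr j)) ↔ _
    simp only [completeBipartiteGraph_adj, Sum.isLeft_inr, Sum.isRight_inr]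
    simp only [Bool.false_eq_true, and_true, and_false, or_self, iff_false]
    intro hadj
    exact (hr j).ne (hleaf _ (hr i) _ hadj).symm

lemma aux_deg_two {V : Type} [Finite V] {G : SimpleGraph V} {v a b c : V}
    (h : (G.neighborSet v).ncard ≤ 2) (ha : G.Adj v a) (hb : G.Adj v b) (hc : G.Adj v c)
    (hab : a ≠ b) : c = a ∨ c = b := by
  by_contra! hh
  have hs : ({a, b, c} : Set V) ⊆ G.neighborSet v := by
    rintro x (rfl | rfl | rfl) <;> assumption
  have := Set.ncard_le_ncard hs (Set.toFinite _)
  rw [Set.ncard_eq_three.2 ⟨a, b, c, hab, hh.1.symm, hh.2.symm, rfl⟩] at this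
  omega

lemma aux_path_cycle {V : Type} [Finite V] {G : SimpleGraph V} (hG : G.Connected)
    (h2 : ∀ v, (G.neighborSet v).ncard ≤ 2) :
    (∃ k, Nonempty (G ≃g pathGraph k)) ∨ (∃ k, Nonempty (G ≃g cycleGraph k)) := by
  classical
  let P : ℕ → Prop := fun n => ∃ f : ℕ → V, (∀ i j, i ≤ n → j ≤ n → f i = f j → i = j) ∧
    ∀ i, i < n → G.Adj (f i) (f (i+1))
  obtain ⟨v0⟩ := hG.nonempty
  have hP0 : P 0 := ⟨fun _ => v0, by intros; omega, by intros; omega⟩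
  have hbd : ∀ n, P n → n ≤ Nat.card V := by
    rintro n ⟨f, hf, -⟩
    have := Nat.card_le_card_of_injective (fun i : Fin n => f i) (by
      intro i j hij
      exact Fin.ext (hf _ _ i.2.le j.2.le hij))
    simpa using this
  obtain ⟨n, hn, hmax⟩ : ∃ n, P n ∧ ¬ P (n+1) := by
    by_contra! hcon
    have : ∀ n, P n := fun n => Nat.rec hP0 hcon n
    have := hbd _ (this (Nat.card V + 1))
    omega
  obtain ⟨f, hf, hadj⟩ := hn
  -- ends
  have hend : ∀ y, G.Adj (f n) y → ∃ i ≤ n, f i = y := by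
    intro y hy
    by_contra! hcon
    refine hmax ⟨fun i => if i ≤ n then f i else y, ?_, ?_⟩
    · intro i j hi hj hij
      grind
    · intro i hi
      by_cases h : i < n
      · have := hadj i h
        simp [h.le, show i + 1 ≤ n by omega, this]
      · obtain rfl : i = n := by omega
        simpa using hy
  have hstart : ∀ y, G.Adj (f 0) y → ∃ i ≤ n, f i = y := by
    intro y hy
    by_contra! hcon
    refine hmax ⟨fun i => if i = 0 then y else f (i-1), ?_, ?_⟩
    · intro i j hi hj hij
      grind
    · intro i hi
      by_cases h : i = 0
      · subst h; simpa using hy.symm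
      · have := hadj (i-1) (by omega)
        rw [show i - 1 + 1 = i by omega] at this
        simpa [h] using this
  have hmid : ∀ i, 0 < i → i < n → ∀ y, G.Adj (f i) y → y = f (i-1) ∨ y = f (i+1) := by
    intro i h0 hi y hy
    have e1 := hadj (i-1) (by omega)
    rw [show i - 1 + 1 = i by omega] at e1
    refine aux_deg_two (h2 _) e1.symm (hadj i hi) hy ?_
    intro hh
    have := hf _ _ (by omega) (by omega) hh
    omega
  have hsurj : ∀ y, ∃ i ≤ n, f i = y := by
    intro y
    refine aux_closed hG {y | ∃ i ≤ n, f i = y} (v := f 0) ⟨0, by omega, rfl⟩ ?_ y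
    rintro _ ⟨i, hi, rfl⟩ y hy
    by_cases h0 : i = 0
    · subst h0; exact hstart y hy
    by_cases h1 : i = n
    · subst h1; exact hend y hy
    rcases hmid i (by omega) (by omega) y hy with rfl | rfl
    · exact ⟨i-1, by omega, rfl⟩
    · exact ⟨i+1, by omega, rfl⟩
  have hkey : ∀ i j, i < j → j ≤ n → G.Adj (f i) (f j) → j = i + 1 ∨ (i = 0 ∧ j = n) := by
    intro i j hij hj ha
    by_cases h0 : i = 0
    · by_cases h1 : j = n
      · exact Or.inr ⟨h0, h1⟩
      · rcases hmid j (by omega) (by omega) _ ha.symm with hh | hh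
        · have := hf _ _ (by omega) (by omega) hh
          omega
        · have := hf _ _ (by omega) (by omega) hh
          omega
    · rcases hmid i (by omega) (by omega) _ ha with hh | hh
      · have := hf _ _ (by omega) (by omega) hh
        omega
      · have := hf _ _ (by omega) (by omega) hh
        omega
  let E : Fin (n+1) ≃ V := Equiv.ofBijective (fun i => f i) ⟨by
      intro i j hij
      exact Fin.ext (hf _ _ (by omega) (by omega) hij), by
      intro y
      obtain ⟨i, hi, rfl⟩ := hsurj y
      exact ⟨⟨i, by omega⟩, rfl⟩⟩
  have hE : ∀ i, E i = f i := fun i => rfl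
  by_cases hcyc : G.Adj (f 0) (f n)
  · right
    refine ⟨n+1, ⟨RelIso.symm ⟨E, ?_⟩⟩⟩
    intro i j
    rw [hE, hE, cycleGraph_adj']
    have hn0 : n ≠ 0 := by rintro rfl; exact hcyc.ne rfl
    have hi := i.2
    have hj := j.2
    have hsub : ∀ a b : Fin (n+1), (a - b).val = 1 ↔ (a.val = b.val + 1 ∨ (a.val = 0 ∧ b.val = n)) := by
      intro a b
      have ha := a.2
      have hb := b.2
      rw [Fin.sub_def]
      simp only
      by_cases hab : b.val ≤ a.val
      · rw [show n + 1 - b.val + a.val = (a.val - b.val) + (n+1) by omega, Nat.add_mod_right,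
          Nat.mod_eq_of_lt (by omega)]
        omega
      · rw [Nat.mod_eq_of_lt (by omega)]
        omega
    rw [hsub, hsub]
    constructor
    · intro ha
      rcases lt_trichotomy i.val j.val with h | h | h
      · have := hkey _ _ h (by omega) ha
        omega
      · rw [h] at ha; exact absurd rfl ha.ne
      · have := hkey _ _ h (by omega) ha.symm
        omega
    · rintro ((h | h) | (h | h))
      · rw [h]; exact (hadj _ (by omega)).symm
      · rw [h.1, h.2]; exact hcyc
      · rw [h]; exact (hadj _ (by omega))
      · rw [h.1, h.2]; exact hcyc.symm
  · left
    refine ⟨n+1, ⟨RelIso.symm ⟨E, ?_⟩⟩⟩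
    intro i j
    rw [hE, hE, pathGraph_adj]
    have hi := i.2
    have hj := j.2
    constructor
    · intro ha
      rcases lt_trichotomy i.val j.val with h | h | h
      · rcases hkey _ _ h (by omega) ha with h' | h'
        · omega
        · rw [h'.1, h'.2] at ha; exact absurd ha hcyc
      · rw [h] at ha; exact absurd rfl ha.ne
      · rcases hkey _ _ h (by omega) ha.symm with h' | h'
        · omega
        · rw [h'.1, h'.2] at ha; exact absurd ha.symm hcyc
    · rintro (h | h)
      · rw [← h]; exact (hadj _ (by omega))
      · rw [← h]; exact (hadj _ (by omega)).symm

lemma aux_deg_le (X : FGraph) [Finite X.V] (v : X.V) : X.deg v ≤ X.maxDeg :=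
  le_csSup (Set.finite_range _).bddAbove ⟨v, rfl⟩

/-- For a prolific graph there is `r` with `1 ≤ r ≤ 3` and `Δ(L^r(G)) > Δ(G)`. -/
theorem maxDeg_index_le_three (X : FGraph) [Finite X.V] (hp : X.Prolific) :
    ∃ r : ℕ, 1 ≤ r ∧ r ≤ 3 ∧ X.maxDeg < (X.iter r).maxDeg := by
  obtain ⟨hc, hpath, hcyc, hstar⟩ := hp
  have hdeg : ∀ v, X.deg v = (X.G.neighborSet v).ncard := fun v => rfl
  have hle : ∀ v, (X.G.neighborSet v).ncard ≤ X.maxDeg := aux_deg_le X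
  haveI := hc.nonempty
  obtain ⟨v, hv⟩ : ∃ v, X.deg v = X.maxDeg :=
    Nat.sSup_mem (Set.range_nonempty X.deg) (Set.finite_range _).bddAbove
  rw [hdeg] at hv
  have h3 : 3 ≤ X.maxDeg := by
    by_contra hlt
    rcases aux_path_cycle hc (fun w => by have := hle w; omega) with ⟨k, ⟨e⟩⟩ | ⟨k, ⟨e⟩⟩
    · exact (hpath k).false e
    · exact (hcyc k).false e
  refine ⟨3, by omega, le_rfl, ?_⟩
  have hpos : ∀ w, X.G.Adj v w → 1 ≤ (X.G.neighborSet w).ncard := by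
    intro w hw
    exact (Set.ncard_pos (Set.toFinite _)).2 ⟨v, hw.symm⟩
  -- a good neighbour
  obtain ⟨a, ha, hgood⟩ : ∃ a, X.G.Adj v a ∧
      (X.maxDeg = 3 → 2 ≤ (X.G.neighborSet a).ncard) := by
    by_cases hd : X.maxDeg = 3
    · by_contra! hcon
      obtain ⟨e⟩ := aux_star hc (hv.trans hd) (fun w hw => by have := (hcon w hw).2; omega)
      exact hstar.false e
    · obtain ⟨a, ha⟩ := (Set.ncard_pos (s := X.G.neighborSet v) (Set.toFinite _)).1 (by omega)
      exact ⟨a, ha, fun h => absurd h hd⟩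
  obtain ⟨b, c, hb, hc', hbc⟩ := (Set.one_lt_ncard_iff (s := X.G.neighborSet v \ {a})
    (Set.toFinite _)).1 (by
      have := Set.ncard_sdiff_singleton_add_one (s := X.G.neighborSet v) ha (Set.toFinite _)
      omega)
  obtain ⟨e, he⟩ := aux_three ha hb.1 hc'.1 (fun h => hb.2 h.symm) (fun h => hc'.2 h.symm) hbc
  have pa := hpos a ha
  have pb := hpos b hb.1
  have pc := hpos c hc'.1
  haveI : Finite (X.iter 3).V :=
    inferInstanceAs (Finite X.G.lineGraph.lineGraph.edgeSet)
  have hfin : (X.G.lineGraph.lineGraph.lineGraph.neighborSet e).ncard ≤ (X.iter 3).maxDeg :=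
    aux_deg_le (X.iter 3) e
  by_cases hd : X.maxDeg = 3
  · have := hgood hd
    omega
  · omega
end

section
/- Let G be a prolific graph. Then there exists r with 1 ≤ r ≤ 4 such that μ(L^r(G)) > μ(G), where μ denotes the matching number. -/
open SimpleGraph

/-- The matching number `μ(G)`: the maximum number of pairwise disjoint edges. -/
noncomputable def FGraph.matchNum (X : FGraph) : ℕ :=
  sSup {k | ∃ s : Set (Sym2 X.V), s ⊆ X.G.edgeSet ∧
    s.Pairwise (fun e f => ∀ v : X.V, ¬(v ∈ e ∧ v ∈ f)) ∧ s.ncard = k}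

namespace PF
variable {V : Type}

lemma closed_univ (G : SimpleGraph V) (hc : G.Preconnected) (S : Set V) (x : V) (hx : x ∈ S)
    (hS : ∀ a ∈ S, ∀ b, G.Adj a b → b ∈ S) (v : V) : v ∈ S := by
  obtain ⟨p⟩ := hc x v
  induction p with
  | nil => exact hx
  | cons h p ih => exact ih (hS _ hx _ h)

def PP (G : SimpleGraph V) (k : ℕ) (f : ℕ → V) : Prop :=
  (∀ i ≤ k, ∀ j ≤ k, f i = f j → i = j) ∧ ∀ i < k, G.Adj (f i) (f (i+1))

lemma exists_max (G : SimpleGraph V) [Finite V] [Nonempty V] :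
    ∃ k f, PP G k f ∧ ∀ g, ¬ PP G (k+1) g := by
  classical
  have hb : ∀ k f, PP G k f → k ≤ Nat.card V := by
    intro k f h
    have : Function.Injective (fun i : Fin (k+1) => f i) := by
      intro i j hij
      exact Fin.ext (h.1 i (by omega) j (by omega) hij)
    have := Nat.card_le_card_of_injective _ this
    simp at this
    omega
  have h0 : ∃ f, PP G 0 f := by
    refine ⟨fun _ => Classical.arbitrary V, ?_, ?_⟩
    · intros; omega
    · intros; omega
  let m := Nat.findGreatest (fun k => ∃ f, PP G k f) (Nat.card V)
  have hm : ∃ f, PP G m f :=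
    Nat.findGreatest_spec (P := fun k => ∃ f, PP G k f) (Nat.zero_le _) h0
  obtain ⟨f, hf⟩ := hm
  refine ⟨m, f, hf, fun g hg => ?_⟩
  have := Nat.le_findGreatest (P := fun k => ∃ f, PP G k f) (hb _ _ hg) ⟨g, hg⟩
  change m + 1 ≤ m at this
  omega

lemma path_or_cycle (G : SimpleGraph V) [Finite V] (hc : G.Connected)
    (hd : ∀ v a b c, G.Adj v a → G.Adj v b → G.Adj v c → a = b ∨ a = c ∨ b = c) :
    (∃ k, Nonempty (G ≃g pathGraph k)) ∨ (∃ k, Nonempty (G ≃g cycleGraph k)) := by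
  classical
  have := hc.nonempty
  obtain ⟨k, f, ⟨hi, ha⟩, hmax⟩ := exists_max G
  have hcl : ∀ i ≤ k, ∀ w, G.Adj (f i) w → ∃ j ≤ k, f j = w := by
    intro i hik w hw
    by_contra hno
    push Not at hno
    by_cases h1 : i = k
    · subst h1
      refine hmax (fun j => if j ≤ i then f j else w) ⟨?_, ?_⟩
      · intro a h1 b h2 h
        grind
      · intro a h
        by_cases h2 : a < i
        · have := ha a h2
          simp [h2.le, Nat.succ_le_of_lt h2, this]
        · have : a = i := by omega
          subst this
          simpa using hw
    · by_cases h2 : i = 0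
      · subst h2
        refine hmax (fun j => if j = 0 then w else f (j-1)) ⟨?_, ?_⟩
        · intro a h1 b h2 h
          grind
        · intro a h
          by_cases h2 : a = 0
          · subst h2; simpa using hw.symm
          · have := ha (a-1) (by omega)
            rw [show a - 1 + 1 = a by omega] at this
            simpa [h2] using this
      · have e1 := ha (i-1) (by omega)
        rw [show i - 1 + 1 = i by omega] at e1
        have e2 := ha i (by omega)
        rcases hd _ _ _ _ e1.symm e2 hw with h | h | h
        · have := hi _ (by omega) _ (by omega) h; omega
        · exact hno _ (by omega) h
        · exact hno _ (by omega) h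
  have hsurj : ∀ v, ∃ j ≤ k, f j = v := by
    intro v
    refine closed_univ G hc.preconnected {v | ∃ j ≤ k, f j = v} (f 0) ⟨0, by omega, rfl⟩ ?_ v
    rintro _ ⟨j, hj, rfl⟩ b hb
    exact hcl j hj b hb
  have hadj : ∀ i j, i < j → j ≤ k → G.Adj (f i) (f j) → j = i + 1 ∨ (i = 0 ∧ j = k) := by
    intro i j hij hj h
    by_contra hno
    push Not at hno
    by_cases h0 : i = 0
    · have e1 := ha (j-1) (by omega)
      rw [show j - 1 + 1 = j by omega] at e1
      have e2 := ha j (by omega)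
      rcases hd _ _ _ _ e1.symm e2 h.symm with h | h | h <;>
        have := hi _ (by omega) _ (by omega) h <;> omega
    · have e1 := ha (i-1) (by omega)
      rw [show i - 1 + 1 = i by omega] at e1
      have e2 := ha i (by omega)
      rcases hd _ _ _ _ e1.symm e2 h with h | h | h <;>
        have := hi _ (by omega) _ (by omega) h <;> omega
  have hbij : Function.Bijective (fun i : Fin (k+1) => f i) := by
    constructor
    · intro i j hij
      exact Fin.ext (hi i (by omega) j (by omega) hij)
    · intro v
      obtain ⟨j, hj, rfl⟩ := hsurj v
      exact ⟨⟨j, by omega⟩, rfl⟩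
  by_cases hcy : 2 ≤ k ∧ G.Adj (f 0) (f k)
  · right
    obtain ⟨hk, hcy⟩ := hcy
    refine ⟨k+1, ⟨RelIso.symm ⟨Equiv.ofBijective _ hbij, ?_⟩⟩⟩
    rintro ⟨i, hi'⟩ ⟨j, hj'⟩
    obtain ⟨m, rfl⟩ : ∃ m, k = m + 1 := ⟨k-1, by omega⟩
    rw [cycleGraph_adj']
    simp only [Equiv.ofBijective_apply, Fin.sub_def]
    have key : ∀ i j, i < j → j ≤ m + 1 → (G.Adj (f i) (f j) ↔ (j = i+1 ∨ i = 0 ∧ j = m + 1)) := by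
      intro i j h1 h2
      refine ⟨hadj i j h1 h2, ?_⟩
      rintro (rfl | ⟨rfl, rfl⟩)
      · exact ha i (by omega)
      · exact hcy
    have hmod : ∀ i j, i < j → j ≤ m + 1 → ((m+1+1 - i + j) % (m+1+1) = j - i) ∧
        ((m+1+1 - j + i) % (m+1+1) = m + 2 + i - j) := by
      intro i j h1 h2
      constructor
      · rw [show m+1+1 - i + j = (j - i) + (m+1+1) by omega, Nat.add_mod_right,
          Nat.mod_eq_of_lt (by omega)]
      · rw [Nat.mod_eq_of_lt (by omega)]; omega
    rcases lt_trichotomy i j with h | h | h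
    · rw [key i j h (by omega), (hmod i j h (by omega)).1, (hmod i j h (by omega)).2]
      omega
    · subst h
      rw [show m+1+1 - i + i = (m+1+1) by omega]
      simp
    · rw [G.adj_comm, key j i h (by omega), (hmod j i h (by omega)).1, (hmod j i h (by omega)).2]
      omega
  · left
    refine ⟨k+1, ⟨RelIso.symm ⟨Equiv.ofBijective _ hbij, ?_⟩⟩⟩
    rintro ⟨i, hi'⟩ ⟨j, hj'⟩
    rw [pathGraph_adj]
    simp only [Equiv.ofBijective_apply]
    have key : ∀ i j, i < j → j ≤ k → (G.Adj (f i) (f j) ↔ j = i+1) := by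
      intro i j h1 h2
      constructor
      · intro h
        rcases hadj i j h1 h2 h with h3 | ⟨rfl, rfl⟩
        · exact h3
        · by_contra h4
          exact hcy ⟨by omega, h⟩
      · rintro rfl
        exact ha i (by omega)
    rcases lt_trichotomy i j with h | h | h
    · rw [key i j h (by omega)]; omega
    · subst h; simp
    · rw [G.adj_comm, key j i h (by omega)]; omega


lemma line_adj (G : SimpleGraph V) (e f : G.edgeSet) :
    G.lineGraph.Adj e f ↔ e ≠ f ∧ ∃ v, v ∈ e.1 ∧ v ∈ f.1 := by
  rw [lineGraph_adj_iff_exists]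

lemma line_preconn (G : SimpleGraph V) (hc : G.Preconnected) : G.lineGraph.Preconnected := by
  intro e f
  obtain ⟨u, hu⟩ : ∃ u, u ∈ e.1 := ⟨_, Sym2.out_fst_mem e.1⟩
  obtain ⟨v, hv⟩ : ∃ v, v ∈ f.1 := ⟨_, Sym2.out_fst_mem f.1⟩
  obtain ⟨p⟩ := hc u v
  induction p generalizing e with
  | nil =>
    by_cases h : e = f
    · rw [h]
    · exact ((line_adj G e f).2 ⟨h, _, hu, hv⟩).reachable
  | @cons u w v h p ih =>
    let g : G.edgeSet := ⟨s(u, w), h⟩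
    refine Reachable.trans ?_ (ih g (by simp [g]) hv)
    by_cases h : e = g
    · rw [h]
    · exact ((line_adj G e g).2 ⟨h, u, hu, by simp [g]⟩).reachable

open Classical in
lemma count (G : SimpleGraph V) [Fintype V] :
    ∑ v, (G.degree v * G.degree v - G.degree v) ≤ 2 * Nat.card G.lineGraph.edgeSet := by
  have h1 : Fintype.card (Σ v, ↥((G.neighborFinset v).offDiag)) =
      ∑ v, (G.degree v * G.degree v - G.degree v) := by
    rw [Fintype.card_sigma]
    refine Finset.sum_congr rfl fun v _ => ?_
    rw [Fintype.card_coe, Finset.offDiag_card]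
    rfl
  have h2 := G.lineGraph.dart_card_eq_twice_card_edges
  rw [Nat.card_eq_fintype_card, ← edgeFinset_card, ← h2, ← h1]
  let F : (Σ v, ↥((G.neighborFinset v).offDiag)) → G.lineGraph.Dart := fun x =>
    ⟨(⟨s(x.1, x.2.1.1), by have := x.2.2; simp only [Finset.mem_offDiag, mem_neighborFinset] at this; exact this.1⟩,
      ⟨s(x.1, x.2.1.2), by have := x.2.2; simp only [Finset.mem_offDiag, mem_neighborFinset] at this; exact this.2.1⟩), by
        have := x.2.2
        simp only [Finset.mem_offDiag, mem_neighborFinset] at this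
        rw [line_adj]
        refine ⟨?_, x.1, by simp, by simp⟩
        intro he
        have he' := congrArg Subtype.val he
        simp only [Sym2.congr_right] at he'
        exact this.2.2 he'⟩
  refine Fintype.card_le_of_injective F ?_
  rintro ⟨v, ⟨a, b⟩, h⟩ ⟨w, ⟨c, d⟩, h'⟩ hF
  simp only [F, Dart.mk.injEq, Prod.mk.injEq] at hF
  obtain ⟨e1, e2⟩ := hF
  replace e1 := congrArg Subtype.val e1
  replace e2 := congrArg Subtype.val e2
  have h0 := h
  have h0' := h'
  simp only [Finset.mem_offDiag, mem_neighborFinset] at h0 h0'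
  have : v = w ∧ a = c ∧ b = d := by
    have := h0.1.ne; have := h0.2.1.ne; have := h0'.1.ne; have := h0'.2.1.ne
    simp only [Sym2.eq_iff] at e1 e2
    grind
  obtain ⟨rfl, rfl, rfl⟩ := this
  rfl

open Classical in
lemma degsum (G : SimpleGraph V) [Fintype V] :
    ∑ v, (G.degree v : ℤ) = 2 * (Nat.card G.edgeSet : ℤ) := by
  have := G.sum_degrees_eq_twice_card_edges
  rw [Nat.card_eq_fintype_card, ← edgeFinset_card]
  exact_mod_cast this

open Classical in
lemma main_ineq (G : SimpleGraph V) [Fintype V] :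
    ∑ v, ((G.degree v : ℤ) - 2)^2 + 4 * ((Nat.card G.edgeSet : ℤ) - Nat.card V) ≤
      2 * ((Nat.card G.lineGraph.edgeSet : ℤ) - Nat.card G.edgeSet) := by
  have h := count G
  have h' : ∑ v, ((G.degree v : ℤ) * G.degree v - G.degree v) ≤
      2 * (Nat.card G.lineGraph.edgeSet : ℤ) := by
    have e : ∑ v, ((G.degree v : ℤ) * G.degree v - G.degree v) =
      ((∑ v, (G.degree v * G.degree v - G.degree v) : ℕ) : ℤ) := by
      push_cast
      refine Finset.sum_congr rfl fun v _ => ?_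
      rw [Nat.cast_sub (Nat.le_mul_self _)]
      push_cast; rfl
    rw [e]; exact_mod_cast h
  have hd := degsum G
  have e : ∑ v, ((G.degree v : ℤ) - 2)^2 = ∑ v, ((G.degree v : ℤ) * G.degree v - G.degree v)
      - 3 * ∑ v, (G.degree v : ℤ) + 4 * Nat.card V := by
    have : (4 * Nat.card V : ℤ) = ∑ v : V, (4 : ℤ) := by simp [mul_comm]
    rw [this, Finset.mul_sum, ← Finset.sum_sub_distrib, ← Finset.sum_add_distrib]
    refine Finset.sum_congr rfl fun v _ => ?_
    ring
  rw [e, hd]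
  linarith

lemma step_a (G : SimpleGraph V) [Finite V] :
    2 * ((Nat.card G.edgeSet : ℤ) - Nat.card V) ≤
      (Nat.card G.lineGraph.edgeSet : ℤ) - Nat.card G.edgeSet := by
  classical
  have := Fintype.ofFinite V
  have h := main_ineq G
  have : 0 ≤ ∑ v, ((G.degree v : ℤ) - 2)^2 := Finset.sum_nonneg fun _ _ => sq_nonneg _
  convert_to _ ≤ _ at h
  linarith

open Classical in
lemma step_b (G : SimpleGraph V) [Fintype V] (v : V) (hv : G.degree v ≠ 2) :
    2 * ((Nat.card G.edgeSet : ℤ) - Nat.card V) + 1 ≤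
      (Nat.card G.lineGraph.edgeSet : ℤ) - Nat.card G.edgeSet := by
  have h := main_ineq G
  have h1 : ((G.degree v : ℤ) - 2)^2 ≤ ∑ v, ((G.degree v : ℤ) - 2)^2 :=
    Finset.single_le_sum (f := fun v => ((G.degree v : ℤ) - 2)^2)
      (fun _ _ => sq_nonneg _) (Finset.mem_univ v)
  have h2 : 0 < ((G.degree v : ℤ) - 2)^2 := by
    apply sq_pos_of_ne_zero
    omega
  omega

open Classical in
lemma step_c (G : SimpleGraph V) [Fintype V] (h1 : ∀ v, 1 ≤ G.degree v) (v : V)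
    (hv : 3 ≤ G.degree v) :
    (Nat.card G.edgeSet : ℤ) - Nat.card V + 1 ≤
      (Nat.card G.lineGraph.edgeSet : ℤ) - Nat.card G.edgeSet := by
  have h := main_ineq G
  have h2 : ((G.degree v : ℤ) - 2) * ((G.degree v : ℤ) - 1) ≤
      ∑ v, ((G.degree v : ℤ) - 2) * ((G.degree v : ℤ) - 1) := by
    refine Finset.single_le_sum (f := fun v => ((G.degree v : ℤ) - 2) * ((G.degree v : ℤ) - 1))
      (fun w _ => ?_) (Finset.mem_univ v)
    have := h1 w
    rcases Nat.lt_or_ge (G.degree w) 2 with h | h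
    · have : G.degree w = 1 := by omega
      simp [this]
    · have : (2:ℤ) ≤ G.degree w := by exact_mod_cast h
      exact mul_nonneg (by linarith) (by linarith)
  have h3 : 2 ≤ ((G.degree v : ℤ) - 2) * ((G.degree v : ℤ) - 1) := by
    have : (3:ℤ) ≤ G.degree v := by exact_mod_cast hv
    nlinarith
  have e : ∑ v, ((G.degree v : ℤ) - 2)^2 = ∑ v, ((G.degree v : ℤ) - 2) * ((G.degree v : ℤ) - 1)
      - ∑ v, (G.degree v : ℤ) + 2 * Nat.card V := by
    have : (2 * Nat.card V : ℤ) = ∑ v : V, (2 : ℤ) := by simp [mul_comm]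
    rw [this, ← Finset.sum_sub_distrib, ← Finset.sum_add_distrib]
    refine Finset.sum_congr rfl fun v _ => ?_
    ring
  have hd := degsum G
  omega



open Classical in
lemma pairing {α β : Type} (f : α → β) (n : ℕ) : ∀ S : Finset α, S.card = n →
    ∃ M : Finset (Sym2 α), (∀ p ∈ M, ∃ x y, p = s(x, y) ∧ x ∈ S ∧ y ∈ S ∧ x ≠ y ∧ f x = f y) ∧
      (∀ p ∈ M, ∀ q ∈ M, p ≠ q → ∀ v, ¬ (v ∈ p ∧ v ∈ q)) ∧
      S.card ≤ 2 * M.card + ((S.image f).filter (fun b => Odd (S.filter (fun x => f x = b)).card)).card := by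
  induction n using Nat.strong_induction_on with
  | _ n ih =>
  intro S hS
  by_cases hinj : ∀ x ∈ S, ∀ y ∈ S, f x = f y → x = y
  · refine ⟨∅, by simp, by simp, ?_⟩
    have h1 : (S.image f).card = S.card := Finset.card_image_of_injOn (by
      intro x hx y hy h; exact hinj x hx y hy h)
    rw [Finset.filter_true_of_mem]
    · omega
    · intro b hb
      obtain ⟨x, hx, rfl⟩ := Finset.mem_image.1 hb
      have : S.filter (fun y => f y = f x) = {x} := by
        ext y
        simp only [Finset.mem_filter, Finset.mem_singleton]
        constructor
        · rintro ⟨h1, h2⟩; exact hinj y h1 x hx h2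
        · rintro rfl; exact ⟨hx, rfl⟩
      rw [this]; simp
  · push Not at hinj
    obtain ⟨x, hx, y, hy, hf, hne⟩ := hinj
    have hsub : ({x, y} : Finset α) ⊆ S := by
      intro z hz; simp at hz; rcases hz with rfl | rfl <;> assumption
    have hcard : (S \ {x, y}).card + 2 = S.card := by
      have := Finset.card_sdiff_add_card_eq_card hsub
      rwa [Finset.card_pair hne] at this
    obtain ⟨M, hM1, hM2, hM3⟩ := ih (S \ {x,y}).card (by omega) _ rfl
    have hnot : ∀ p ∈ M, x ∉ p ∧ y ∉ p := by
      intro p hp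
      obtain ⟨a, b, rfl, ha, hb, _⟩ := hM1 p hp
      simp at ha hb ⊢
      grind
    have hnm : s(x, y) ∉ M := fun h => (hnot _ h).1 (by simp)
    refine ⟨insert s(x, y) M, ?_, ?_, ?_⟩
    · intro p hp
      rcases Finset.mem_insert.1 hp with rfl | hp
      · exact ⟨x, y, rfl, hx, hy, hne, hf⟩
      · obtain ⟨a, b, h1, ha, hb, h2⟩ := hM1 p hp
        exact ⟨a, b, h1, (Finset.mem_sdiff.1 ha).1, (Finset.mem_sdiff.1 hb).1, h2⟩
    · intro p hp q hq hpq v hv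
      rcases Finset.mem_insert.1 hp with rfl | hp <;> rcases Finset.mem_insert.1 hq with rfl | hq
      · exact hpq rfl
      · have := hnot q hq
        simp at hv
        rcases hv with ⟨rfl | rfl, h⟩
        · exact this.1 h
        · exact this.2 h
      · have := hnot p hp
        simp at hv
        rcases hv with ⟨h, rfl | rfl⟩
        · exact this.1 h
        · exact this.2 h
      · exact hM2 p hp q hq hpq v hv
    · rw [Finset.card_insert_of_notMem hnm]
      have : (((S \ {x,y}).image f).filter
          (fun b => Odd ((S \ {x,y}).filter (fun x => f x = b)).card)).card ≤
          ((S.image f).filter (fun b => Odd (S.filter (fun x => f x = b)).card)).card := by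
        apply Finset.card_le_card
        intro b hb
        simp only [Finset.mem_filter] at hb ⊢
        refine ⟨Finset.image_subset_image Finset.sdiff_subset hb.1, ?_⟩
        by_cases hbx : f x = b
        · have e : ({x, y} : Finset α) ⊆ S.filter (fun x => f x = b) := by
            intro z hz; simp at hz; rcases hz with rfl | rfl
            · simp [hx, hbx]
            · simp [hy, ← hf, hbx]
          have e2 : (S \ {x,y}).filter (fun x => f x = b) = S.filter (fun x => f x = b) \ {x,y} := by
            ext z; simp; tauto
          have e3 := Finset.card_sdiff_add_card_eq_card e
          rw [Finset.card_pair hne, ← e2] at e3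
          rw [← e3]
          have := hb.2
          rw [Nat.odd_add]
          simp [this]
        · have e2 : (S \ {x,y}).filter (fun x => f x = b) = S.filter (fun x => f x = b) := by
            ext z; simp
            intro h1 _
            constructor
            · rintro rfl; exact hbx h1
            · rintro rfl; exact hbx (hf.trans h1)
          rw [← e2]; exact hb.2
      omega

open Classical in
/-- number of edges assigned to `v` -/
noncomputable def cnt (G : SimpleGraph V) [Fintype V] (a : G.edgeSet → V) (v : V) : ℕ :=
  (Finset.univ.filter (fun e => a e = v)).card

open Classical in
lemma cnt_sum (G : SimpleGraph V) [Fintype V] (a : G.edgeSet → V) (v : V) :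
    (cnt G a v : ZMod 2) = ∑ e, if a e = v then 1 else 0 := by
  simp [cnt]

open Classical in
lemma flip (G : SimpleGraph V) [Fintype V] (a : G.edgeSet → V) (ha : ∀ e, a e ∈ e.1)
    (u v : V) (p : G.Walk u v) : ∃ b : G.edgeSet → V, (∀ e, b e ∈ e.1) ∧
    ∀ w, (cnt G b w : ZMod 2) = cnt G a w + (if w = u then 1 else 0) + (if w = v then 1 else 0) := by
  induction p generalizing a with
  | nil =>
    refine ⟨a, ha, fun w => ?_⟩
    rw [add_assoc, CharTwo.add_self_eq_zero, add_zero]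
  | @cons u x v h p ih =>
    let g : G.edgeSet := ⟨s(u, x), h⟩
    let c : V := if a g = u then x else u
    let a' := Function.update a g c
    have hag : a g = u ∨ a g = x := by
      have := ha g
      simpa [g] using this
    have hux := h.ne
    have ha' : ∀ e, a' e ∈ e.1 := by
      intro e
      by_cases he : e = g
      · subst he
        simp only [a', Function.update_self, c]
        split_ifs <;> simp [g]
      · simp [a', he, ha]
    obtain ⟨b, hb, hb2⟩ := ih a' ha'
    refine ⟨b, hb, fun w => ?_⟩
    have key : (cnt G a' w : ZMod 2) = cnt G a w + (if w = u then 1 else 0) + (if w = x then 1 else 0) := by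
      rw [cnt_sum, cnt_sum, ← Finset.add_sum_erase _ _ (Finset.mem_univ g),
        ← Finset.add_sum_erase (f := fun e => if a e = w then (1:ZMod 2) else 0) _ (Finset.mem_univ g)]
      have : ∑ e ∈ Finset.univ.erase g, (if a' e = w then (1:ZMod 2) else 0) =
          ∑ e ∈ Finset.univ.erase g, (if a e = w then (1:ZMod 2) else 0) := by
        refine Finset.sum_congr rfl fun e he => ?_
        have : e ≠ g := Finset.ne_of_mem_erase he
        simp [a', this]
      rw [this]
      have h2 : (if a' g = w then (1:ZMod 2) else 0) = (if a g = w then (1:ZMod 2) else 0) +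
          (if w = u then 1 else 0) + (if w = x then 1 else 0) := by
        have t : (1 : ZMod 2) + 1 = 0 := by decide
        simp only [a', Function.update_self, c]
        rcases hag with h | h <;> rw [h] <;> grind
      rw [h2]; ring
    rw [hb2, key]
    have t : (if w = x then (1:ZMod 2) else 0) + (if w = x then 1 else 0) = 0 :=
      CharTwo.add_self_eq_zero _
    linear_combination t

open Classical in
lemma good_assign (G : SimpleGraph V) [Fintype V] (hc : G.Preconnected) :
    ∃ a : G.edgeSet → V, (∀ e, a e ∈ e.1) ∧
      (Finset.univ.filter (fun v => Odd (cnt G a v))).card ≤ 1 := by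
  have hne : ∃ n, ∃ a : G.edgeSet → V, (∀ e, a e ∈ e.1) ∧
      (Finset.univ.filter (fun v => Odd (cnt G a v))).card = n :=
    ⟨_, fun e => e.1.out.1, fun e => Sym2.out_fst_mem e.1, rfl⟩
  obtain ⟨a, ha, hn⟩ := Nat.find_spec hne
  refine ⟨a, ha, ?_⟩
  by_contra hgt
  push Not at hgt
  obtain ⟨u, hu, v, hv, huv⟩ := Finset.one_lt_card.1 hgt
  obtain ⟨p⟩ := hc u v
  obtain ⟨b, hb, hb2⟩ := flip G a ha u v p
  refine Nat.find_min hne (m := (Finset.univ.filter (fun v => Odd (cnt G b v))).card) ?_ ⟨b, hb, rfl⟩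
  rw [← hn]
  apply Finset.card_lt_card
  simp only [Finset.mem_filter, Finset.mem_univ, true_and, ← ZMod.natCast_eq_one_iff_odd] at hu hv
  have t : (1 : ZMod 2) + 1 = 0 := by decide
  have t2 : (0 : ZMod 2) ≠ 1 := by decide
  have hbu : (cnt G b u : ZMod 2) = 0 := by
    rw [hb2, hu, if_pos rfl, if_neg huv]; simpa using t
  have hbv : (cnt G b v : ZMod 2) = 0 := by
    rw [hb2, hv, if_pos rfl, if_neg huv.symm]; simpa using t
  rw [Finset.ssubset_iff_of_subset]
  · refine ⟨u, ?_, ?_⟩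
    · simp [← ZMod.natCast_eq_one_iff_odd, hu]
    · simp [← ZMod.natCast_eq_one_iff_odd, hbu]
  · intro w hw
    simp only [Finset.mem_filter, Finset.mem_univ, true_and, ← ZMod.natCast_eq_one_iff_odd] at hw ⊢
    by_cases h1 : w = u
    · subst h1; exact hu
    · by_cases h2 : w = v
      · subst h2; exact hv
      · rw [hb2, if_neg h1, if_neg h2] at hw
        simpa using hw

lemma bdd (X : FGraph) [Finite X.V] (s : Set (Sym2 X.V)) (h1 : s ⊆ X.G.edgeSet)
    (h2 : s.Pairwise (fun e f => ∀ v : X.V, ¬(v ∈ e ∧ v ∈ f))) :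
    2 * s.ncard ≤ Nat.card X.V := by
  classical
  have := Fintype.ofFinite X.V
  have hs : s.Finite := Set.toFinite s
  rw [Set.ncard_eq_toFinset_card s hs, Nat.card_eq_fintype_card]
  have hd : Set.PairwiseDisjoint (hs.toFinset : Set (Sym2 X.V)) (fun e : Sym2 X.V => e.toFinset) := by
    intro e he f hf hef
    rw [Function.onFun, Finset.disjoint_left]
    intro v hv hv'
    exact h2 (by simpa using he) (by simpa using hf) hef v
      ⟨Sym2.mem_toFinset.1 hv, Sym2.mem_toFinset.1 hv'⟩
  have hc := Finset.card_biUnion hd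
  have : ∑ e ∈ hs.toFinset, e.toFinset.card = ∑ e ∈ hs.toFinset, 2 := by
    refine Finset.sum_congr rfl fun e he => ?_
    exact Sym2.card_toFinset_of_not_isDiag e (X.G.not_isDiag_of_mem_edgeSet (h1 (by simpa using he)))
  rw [this, Finset.sum_const, smul_eq_mul] at hc
  have := Finset.card_le_univ (hs.toFinset.biUnion (fun e : Sym2 X.V => e.toFinset))
  omega

lemma matchNum_le (X : FGraph) [Finite X.V] : 2 * X.matchNum ≤ Nat.card X.V := by
  have : X.matchNum ≤ Nat.card X.V / 2 := by
    apply csSup_le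
    · exact ⟨0, ∅, by simp, by simp, by simp⟩
    · rintro k ⟨s, h1, h2, rfl⟩
      have := bdd X s h1 h2
      omega
  omega

lemma le_matchNum (X : FGraph) [Finite X.V] (s : Set (Sym2 X.V)) (h1 : s ⊆ X.G.edgeSet)
    (h2 : s.Pairwise (fun e f => ∀ v : X.V, ¬(v ∈ e ∧ v ∈ f))) : s.ncard ≤ X.matchNum := by
  apply le_csSup
  · refine ⟨Nat.card X.V, ?_⟩
    rintro k ⟨s, h1, h2, rfl⟩
    have := bdd X s h1 h2
    omega
  · exact ⟨s, h1, h2, rfl⟩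

lemma line_matchNum (X : FGraph) [Finite X.V] (hc : X.G.Preconnected) :
    Nat.card X.G.edgeSet ≤ 2 * X.line.matchNum + 1 := by
  classical
  have := Fintype.ofFinite X.V
  obtain ⟨a, ha, hodd⟩ := good_assign X.G hc
  obtain ⟨M, hM1, hM2, hM3⟩ := pairing a _ Finset.univ rfl
  have hfin : Finite X.line.V := inferInstanceAs (Finite X.G.edgeSet)
  have h := le_matchNum X.line (M : Set (Sym2 X.G.edgeSet)) (by
    intro p hp
    obtain ⟨x, y, rfl, _, _, hne, hf⟩ := hM1 p hp
    change X.G.lineGraph.Adj x y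
    rw [line_adj]
    exact ⟨hne, a x, ha x, hf ▸ ha y⟩) (by
    intro p hp q hq hpq v hv
    exact hM2 p hp q hq hpq v hv)
  have h' : M.card ≤ X.line.matchNum := by
    rw [← Set.ncard_coe_finset]; exact h
  have h3 : ((Finset.univ.image a).filter
      (fun b => Odd ((Finset.univ : Finset X.G.edgeSet).filter (fun x => a x = b)).card)).card ≤ 1 := by
    refine le_trans (Finset.card_le_card ?_) hodd
    intro b hb
    simp only [Finset.mem_filter, Finset.mem_univ, true_and] at hb ⊢
    convert hb.2 using 1
    simp [cnt]
  rw [Finset.card_univ] at hM3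
  rw [Nat.card_eq_fintype_card]
  omega

open Classical in
lemma deg_three (G : SimpleGraph V) [Fintype V] (v a b c : V) (ha : G.Adj v a) (hb : G.Adj v b)
    (hc : G.Adj v c) (hab : a ≠ b) (hac : a ≠ c) (hbc : b ≠ c) : 3 ≤ G.degree v := by
  have : ({a, b, c} : Finset V) ⊆ G.neighborFinset v := by
    intro x hx
    simp only [Finset.mem_insert, Finset.mem_singleton] at hx
    rw [mem_neighborFinset]
    rcases hx with rfl | rfl | rfl <;> assumption
  have h := Finset.card_le_card this
  rw [Finset.card_eq_three.2 ⟨a, b, c, hab, hac, hbc, rfl⟩] at h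
  exact h

open Classical in
lemma claw (G : SimpleGraph V) [Fintype V] (hconn : G.Preconnected)
    (v a b c : V) (ha : G.Adj v a) (hb : G.Adj v b)
    (hc : G.Adj v c) (hab : a ≠ b) (hac : a ≠ c) (hbc : b ≠ c)
    (hno : IsEmpty (G ≃g completeBipartiteGraph (Fin 1) (Fin 3))) :
    ∃ e : G.edgeSet, G.lineGraph.degree e ≠ 2 := by
  by_contra hall
  push Not at hall
  have h3 : ∀ e f g h : Sym2 V, e ∈ G.edgeSet → f ∈ G.edgeSet → g ∈ G.edgeSet → h ∈ G.edgeSet →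
      e ≠ f → e ≠ g → e ≠ h → f ≠ g → f ≠ h → g ≠ h → (∃ x, x ∈ e ∧ x ∈ f) →
      (∃ x, x ∈ e ∧ x ∈ g) → (∃ x, x ∈ e ∧ x ∈ h) → False := by
    intro e f g h he hf hg hh n1 n2 n3 n4 n5 n6 i1 i2 i3
    have := deg_three G.lineGraph ⟨e, he⟩ ⟨f, hf⟩ ⟨g, hg⟩ ⟨h, hh⟩
      ((line_adj _ _ _).2 ⟨by simpa using n1, i1⟩) ((line_adj _ _ _).2 ⟨by simpa using n2, i2⟩)
      ((line_adj _ _ _).2 ⟨by simpa using n3, i3⟩) (by simpa using n4) (by simpa using n5)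
      (by simpa using n6)
    have h2 := hall ⟨e, he⟩
    omega
  have leaf : ∀ a b c, G.Adj v a → G.Adj v b → G.Adj v c → a ≠ b → a ≠ c → b ≠ c →
      ∀ w, G.Adj a w → w = v := by
    intro a b c ha hb hc hab hac hbc w hw
    by_contra hwv
    have := ha.ne; have := hb.ne; have := hc.ne; have := hw.ne
    refine h3 s(v, a) s(v, b) s(v, c) s(a, w) ha hb hc hw ?_ ?_ ?_ ?_ ?_ ?_
      ⟨v, by simp, by simp⟩ ⟨v, by simp, by simp⟩ ⟨a, by simp, by simp⟩ <;>
      (rw [Ne, Sym2.eq_iff]; grind)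
  have hv : ∀ w, G.Adj v w → w = a ∨ w = b ∨ w = c := by
    intro w hw
    by_contra hno
    push Not at hno
    have := ha.ne; have := hb.ne; have := hc.ne; have := hw.ne
    refine h3 s(v, a) s(v, b) s(v, c) s(v, w) ha hb hc hw ?_ ?_ ?_ ?_ ?_ ?_
      ⟨v, by simp, by simp⟩ ⟨v, by simp, by simp⟩ ⟨v, by simp, by simp⟩ <;>
      (rw [Ne, Sym2.eq_iff]; grind)
  have la := leaf a b c ha hb hc hab hac hbc
  have lb := leaf b a c hb ha hc hab.symm hbc hac
  have lc := leaf c a b hc ha hb hac.symm hbc.symm hab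
  have hall' : ∀ x, x = v ∨ x = a ∨ x = b ∨ x = c := by
    intro x
    refine closed_univ G hconn {x | x = v ∨ x = a ∨ x = b ∨ x = c} v (Or.inl rfl) ?_ x
    rintro y (rfl | rfl | rfl | rfl) w hw
    · exact Or.inr (hv w hw)
    · exact Or.inl (la w hw)
    · exact Or.inl (lb w hw)
    · exact Or.inl (lc w hw)
  have := ha.ne; have := hb.ne; have := hc.ne
  let F : Fin 1 ⊕ Fin 3 → V := Sum.elim (fun _ => v) ![a, b, c]
  have hF : Function.Bijective F := by
    constructor
    · rintro (i | i) (j | j) h <;> fin_cases i <;> fin_cases j <;> simp [F] at h ⊢ <;> grind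
    · intro x
      rcases hall' x with rfl | rfl | rfl | rfl
      · exact ⟨Sum.inl 0, rfl⟩
      · exact ⟨Sum.inr 0, rfl⟩
      · exact ⟨Sum.inr 1, rfl⟩
      · exact ⟨Sum.inr 2, rfl⟩
  refine hno.false (RelIso.symm ⟨Equiv.ofBijective F hF, ?_⟩)
  have := ha.symm; have := hb.symm; have := hc.symm
  rintro (i | i) (j | j) <;> fin_cases i <;> fin_cases j <;> simp [F] <;> grind

end PF

/-- For a prolific graph there is `r` with `1 ≤ r ≤ 4` and `μ(L^r(G)) > μ(G)`. -/
theorem matchingNumber_index_le_four (X : FGraph) [Finite X.V] (hp : X.Prolific) :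
    ∃ r : ℕ, 1 ≤ r ∧ r ≤ 4 ∧ X.matchNum < (X.iter r).matchNum := by
  classical
  obtain ⟨hc, hpath, hcyc, hclaw⟩ := hp
  have := Fintype.ofFinite X.V
  refine ⟨4, by norm_num, le_rfl, ?_⟩
  have hX4 : X.iter 4 = X.line.line.line.line := rfl
  have hf1 : Finite X.line.V := inferInstanceAs (Finite X.G.edgeSet)
  have hf2 : Finite X.line.line.V := inferInstanceAs (Finite X.line.G.edgeSet)
  have hf3 : Finite X.line.line.line.V := inferInstanceAs (Finite X.line.line.G.edgeSet)
  have c1 : X.line.G.Preconnected := PF.line_preconn X.G hc.preconnected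
  have c2 : X.line.line.G.Preconnected := PF.line_preconn _ c1
  have c3 : X.line.line.line.G.Preconnected := PF.line_preconn _ c2
  have hm := PF.line_matchNum _ c3
  have hl := PF.matchNum_le X
  rw [hX4]
  have hv : ∃ v a b c, X.G.Adj v a ∧ X.G.Adj v b ∧ X.G.Adj v c ∧ a ≠ b ∧ a ≠ c ∧ b ≠ c := by
    by_contra hno
    push Not at hno
    rcases PF.path_or_cycle X.G hc (by
      intro v a b c h1 h2 h3
      have := hno v a b c h1 h2 h3
      tauto) with ⟨k, ⟨f⟩⟩ | ⟨k, ⟨f⟩⟩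
    · exact (hpath k).false f
    · exact (hcyc k).false f
  obtain ⟨v, a, b, c, ha, hb, hc', hab, hac, hbc⟩ := hv
  have hd3 := PF.deg_three X.G v a b c ha hb hc' hab hac hbc
  have hd1 : ∀ w, 1 ≤ X.G.degree w := by
    intro w
    have : Nontrivial X.V := ⟨v, a, ha.ne⟩
    exact hc.preconnected.degree_pos_of_nontrivial w
  have s0 := hc.card_vert_le_card_edgeSet_add_one
  have s1 := PF.step_b X.G v (by omega)
  have s1' := PF.step_c X.G hd1 v hd3
  obtain ⟨e, he⟩ := PF.claw X.G hc.preconnected v a b c ha hb hc' hab hac hbc hclaw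
  have s2 := PF.step_b X.G.lineGraph e (by convert he)
  have s3 := PF.step_a X.line.line.G
  change 2 * ((Nat.card X.line.line.G.edgeSet : ℤ) - Nat.card X.G.lineGraph.edgeSet) ≤
    (Nat.card X.line.line.line.G.edgeSet : ℤ) - Nat.card X.line.line.G.edgeSet at s3
  change 2 * ((Nat.card X.G.lineGraph.edgeSet : ℤ) - Nat.card X.G.edgeSet) + 1 ≤
    (Nat.card X.line.line.G.edgeSet : ℤ) - Nat.card X.G.lineGraph.edgeSet at s2
  omega
end
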